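/- Let Ω ⊂ ℝ³ be open and connected with Ω ⊂ {x : x₁² + x₂² < C₀²} for some C₀ > 0, and suppose the uniform cross-sectional Poincaré inequality holds: there is Λ₀ > 0 such that for every t ∈ ℝ and every C¹ function w on the closure of Ω, ‖w − (average of w over Σ_t)‖_{L²(Σ_t)} ≤ Λ₀ ‖∇w‖_{L²(Σ_t)}, where Σ_t = {x′ ∈ ℝ² : (x′, t) ∈ Ω} has positive finite two-dimensional measure. Let A : Ω → (3×3 symmetric matrices) be measurable with λ|ξ|² ≤ ξᵀ A(x) ξ ≤ Λ|ξ|² for all x ∈ Ω, ξ ∈ ℝ³, where 0 < λ ≤ Λ. Suppose Φ is C¹ on the closure of Ω with sup_Ω |∇Φ| < ∞, ∫_Ω (A ∇Φ) · ∇ψ dx = 0 for every C¹ function ψ : ℝ³ → ℝ with compact support, and ∫_{Σ_t} (A ∇Φ) · e₃ dx′ = 0 for every t ∈ ℝ. Then ∇Φ = 0 on Ω. -/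

import Mathlib

open Real Set MeasureTheory

/-- Gradient of a scalar function on ℝ³. -/
noncomputable def grad3 (φ : (Fin 3 → ℝ) → ℝ) (x : Fin 3 → ℝ) : Fin 3 → ℝ :=
  fun i => fderiv ℝ φ x (Pi.single i 1)

/-- Euclidean length of a vector of ℝ³. -/
noncomputable def norm3 (u : Fin 3 → ℝ) : ℝ := Real.sqrt (∑ i, (u i) ^ 2)

/-- Squared Euclidean length of a vector of ℝ³. -/
noncomputable def normSq3 (u : Fin 3 → ℝ) : ℝ := ∑ i, (u i) ^ 2

/-- The cross-section Σ_t = {x′ ∈ ℝ² : (x′, t) ∈ Ω}. -/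
def crossSection (Ω : Set (Fin 3 → ℝ)) (t : ℝ) : Set (Fin 2 → ℝ) :=
  {x' | (Fin.snoc x' t : Fin 3 → ℝ) ∈ Ω}

/-!
Testing the equation with `χ(x₃) Φ` and using the zero flux to subtract from `Φ` a constant on each
cross-section, the Poincaré inequality bounds the Dirichlet energy `E` of the slabs `{|x₃| ≤ R}` by
`E(R) ≤ (K / R) E(2R)`. The cross-sections and `∇Φ` being bounded, `E` grows at most linearly, so
two iterations give `E = 0`.

The delicate point is that `χ(x₃) Φ` is an admissible test function. The closure of `Ω` may have
cusps, so a function `f` that is `C¹` on it need not be the restriction of a `C¹` function of `ℝ³`,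
while only such restrictions are tested. One considers more generally the pairings of the flux with
the gradients of `x ↦ W(x, f(x))`, for `W` of class `C¹`, and the largest open set `V` over which
they all vanish; it contains `Ω`. If `V` were not the whole space, Baire's theorem would provide a
ball meeting the complement of `V` in which `f` satisfies a Lipschitz bound, uniform over the base
points outside `V`. Such an `f` has a Lipschitz barrier that agrees with `f` outside `V` and lies
strictly above it in `Ω`. Collapsing the fibres of `(x, s) ↦ x` onto the graph of a mollification of
the barrier turns `W(x, f(x))` into a `C¹` function of `x ∈ ℝ³`, whose pairing vanishes.
-/

open Filter Metric
open scoped Matrix NNReal Topology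

section MetricSpace

variable {X Y : Type*} [MetricSpace X] [PseudoMetricSpace Y]

theorem exists_ball_forall_dist_le_of_isBigO {K Z : Set X} {f : X → Y} (hf : ContinuousOn f K)
    (hZ : IsComplete Z) (hZne : Z.Nonempty) (hZK : Z ⊆ K)
    (hO : ∀ x ∈ Z, (fun y => dist (f y) (f x)) =O[𝓝[K] x] fun y => dist y x) :
    ∃ x₀ ∈ Z, ∃ r > 0, ∃ C : ℝ≥0, ∀ x ∈ Z ∩ ball x₀ r, ∀ y ∈ K ∩ ball x₀ r,
      dist (f y) (f x) ≤ C * dist y x := by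
  have : Nonempty Z := hZne.to_subtype
  have : CompleteSpace Z := hZ.completeSpace_coe
  let F : ℕ → Set Z := fun n =>
    {x | ∀ y ∈ K, dist y (x : X) < 1 / (n + 1) → dist (f y) (f x) ≤ n * dist y x}
  have hF_closed (n : ℕ) : IsClosed (F n) := by
    have hfZ : Continuous fun x : Z => f x := (hf.mono hZK).domRestrict
    have hF : F n = ⋂ y ∈ K, {x : Z | 1 / ((n : ℝ) + 1) ≤ dist y x} ∪
        {x : Z | dist (f y) (f x) ≤ n * dist y x} := by
      ext x
      simp only [F, mem_ofPred_eq, mem_iInter, mem_union, ← not_lt, imp_iff_not_or]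
    rw [hF]
    exact isClosed_biInter fun y _ => (isClosed_le (by fun_prop) (by fun_prop)).union
      (isClosed_le (continuous_const.dist hfZ) (by fun_prop))
  have hF_cover : ⋃ n, F n = univ := by
    refine eq_univ_of_forall fun x => mem_iUnion.2 ?_
    obtain ⟨c, hc⟩ := (hO x x.2).bound
    obtain ⟨ε, hε, hcε⟩ := Metric.eventually_nhds_iff.1 (eventually_nhdsWithin_iff.1 hc)
    obtain ⟨n₁, hn₁⟩ := exists_nat_one_div_lt hε
    obtain ⟨n₂, hn₂⟩ := exists_nat_ge c
    refine ⟨max n₁ n₂, fun y hy hyx => ?_⟩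
    have hy_lt : dist y (x : X) < ε := hyx.trans_le
      ((one_div_le_one_div_of_le (by positivity) (by gcongr; exact le_max_left _ _)).trans hn₁.le)
    have hbound := hcε hy_lt hy
    simp only [Real.norm_of_nonneg dist_nonneg] at hbound
    refine hbound.trans ?_
    gcongr
    exact hn₂.trans (by gcongr; exact le_max_right _ _)
  obtain ⟨n, x₀, hx₀⟩ := nonempty_interior_of_iUnion_of_closed hF_closed hF_cover
  obtain ⟨ρ, hρ, hball⟩ := Metric.mem_nhds_iff.1 (mem_interior_iff_mem_nhds.1 hx₀)
  have hr : (0 : ℝ) < 1 / (n + 1) / 2 := by positivity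
  refine ⟨x₀, x₀.2, min ρ (1 / (n + 1) / 2), lt_min hρ hr, n, fun x hx y hy => ?_⟩
  have hx_lt := lt_min_iff.1 (mem_ball.1 hx.2)
  have hy_lt := lt_min_iff.1 (mem_ball.1 hy.2)
  have hxF : (⟨x, hx.1⟩ : Z) ∈ F n := hball hx_lt.1
  exact hxF y hy.1 (by linarith [dist_triangle_right y x (x₀ : X)])

theorem exists_lipschitzWith_eqOn_lt {K Z : Set X} {f : X → ℝ} {C : ℝ≥0} (hZ : IsCompact Z)
    (hZne : Z.Nonempty) (hZK : Z ⊆ K) (hf : ∀ x ∈ Z, ∀ y ∈ K, dist (f y) (f x) ≤ C * dist y x) :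
    ∃ (D : ℝ≥0) (H : X → ℝ), LipschitzWith D H ∧ EqOn H f Z ∧ ∀ y ∈ K \ Z, f y < H y := by
  obtain ⟨h, hh, hfh⟩ := (LipschitzOnWith.of_dist_le_mul fun x hx y hy =>
    hf y hy x (hZK hx)).extend_real
  refine ⟨C + (2 * C + 1) * 1, fun x => h x + (2 * C + 1) * infDist x Z, ?_, ?_, ?_⟩
  · refine hh.add (LipschitzWith.of_dist_le_mul fun x y => ?_)
    have := (lipschitz_infDist_pt Z).dist_le_mul x y
    rw [Real.dist_eq, ← mul_sub, abs_mul, abs_of_nonneg (by positivity), ← Real.dist_eq]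
    push_cast at this ⊢
    rw [mul_assoc]
    gcongr
  · intro x hx
    simp [infDist_zero_of_mem hx, hfh hx]
  · rintro y ⟨hyK, hyZ⟩
    obtain ⟨b, hb, hyb⟩ := hZ.exists_infDist_eq_dist hZne y
    have hpos : 0 < dist y b := hyb ▸ (hZ.isClosed.notMem_iff_infDist_pos hZne).1 hyZ
    have hfy := (abs_le.1 (hf b hb y hyK)).2
    have hhy := (abs_le.1 (hh.dist_le_mul y b)).1
    rw [← hfh hb] at hhy
    simp only [hyb]
    linarith

end MetricSpace

section Smooth

variable {E : Type*} [NormedAddCommGroup E] [NormedSpace ℝ E] [FiniteDimensional ℝ E]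

theorem exists_contDiff_hasCompactSupport_eventuallyEq_one {Q O : Set E} (hQ : IsCompact Q)
    (hO : IsOpen O) (hQO : Q ⊆ O) :
    ∃ θ : E → ℝ, ContDiff ℝ 1 θ ∧ HasCompactSupport θ ∧ tsupport θ ⊆ O ∧
      ∀ x ∈ Q, θ =ᶠ[𝓝 x] 1 := by
  obtain ⟨L, hL, hQL, hLO⟩ := exists_compact_between hQ hO hQO
  obtain ⟨θ, hθ_one, hθ_zero, -⟩ := exists_contMDiffMap_one_nhds_of_subset_interior
    (modelWithCornersSelf ℝ E) (n := 1) hQ.isClosed hQL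
  have hsupp : tsupport θ ⊆ L :=
    closure_minimal (fun x hx => by_contra fun hxL => hx (hθ_zero x hxL)) hL.isClosed
  exact ⟨θ, θ.contMDiff.contDiff, hL.of_isClosed_subset (isClosed_tsupport _) hsupp,
    hsupp.trans hLO, fun x hx => eventually_nhdsSet_iff_forall.1 hθ_one x hx⟩

theorem exists_contDiff_lipschitzWith_dist_le {F : Type*} [NormedAddCommGroup F] [NormedSpace ℝ F]
    [CompleteSpace F] {C : ℝ≥0} {h : E → F} (hh : LipschitzWith C h) {ε : ℝ} (hε : 0 < ε) :
    ∃ g : E → F, ContDiff ℝ 1 g ∧ LipschitzWith C g ∧ ∀ x, dist (g x) (h x) ≤ ε := by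
  borelize E
  have hr : 0 < ε / (C + 1) := by positivity
  let φ : ContDiffBump (0 : E) := ⟨ε / (C + 1) / 2, ε / (C + 1), half_pos hr, half_lt_self hr⟩
  let η := φ.normed Measure.addHaar
  have hint (x : E) : Integrable (fun t => η t • h (x - t)) Measure.addHaar :=
    (φ.continuous_normed.smul (hh.continuous.comp (by fun_prop))).integrable_of_hasCompactSupport
      φ.hasCompactSupport_normed.smul_right
  refine ⟨convolution η h (ContinuousLinearMap.lsmul ℝ ℝ) Measure.addHaar,
    φ.hasCompactSupport_normed.contDiff_convolution_left _ φ.contDiff_normed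
      hh.continuous.locallyIntegrable, LipschitzWith.of_dist_le_mul fun x y => ?_, fun x => ?_⟩
  · simp only [convolution, ContinuousLinearMap.lsmul_apply]
    rw [dist_eq_norm, ← integral_sub (hint x) (hint y)]
    calc ‖∫ t, (η t • h (x - t) - η t • h (y - t)) ∂Measure.addHaar‖
        ≤ ∫ t, η t * (C * dist x y) ∂Measure.addHaar := by
          refine norm_integral_le_of_norm_le (φ.integrable_normed.mul_const _)
            (Eventually.of_forall fun t => ?_)
          rw [← smul_sub, norm_smul, Real.norm_of_nonneg (φ.nonneg_normed t)]
          refine mul_le_mul_of_nonneg_left ?_ (φ.nonneg_normed t)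
          simpa [dist_sub_right, dist_eq_norm] using hh.dist_le_mul (x - t) (y - t)
      _ = C * dist x y := by rw [integral_mul_const, φ.integral_normed, one_mul]
  · refine φ.dist_normed_convolution_le hh.continuous.aestronglyMeasurable fun y hy => ?_
    calc dist (h y) (h x) ≤ C * dist y x := hh.dist_le_mul y x
      _ ≤ C * (ε / (C + 1)) := by gcongr; exact (mem_ball.1 hy).le
      _ ≤ ε := by rw [mul_div_left_comm]; exact mul_le_of_le_one_right hε.le
                    (div_le_one_of_le₀ (by linarith) (by positivity))

theorem exists_contDiff_lipschitzWith_truncation :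
    ∃ D : ℝ≥0, ∀ δ > 0, ∃ σ : ℝ → ℝ, ContDiff ℝ 1 σ ∧ LipschitzWith D σ ∧
      (∀ s, |s| < δ → σ s = s) ∧ ∀ s, 2 * δ < |s| → σ s = 0 := by
  let β : ContDiffBump (0 : ℝ) := ⟨1, 2, one_pos, one_lt_two⟩
  have hS : ContDiff ℝ 1 fun s => β s * s := β.contDiff.mul contDiff_id
  obtain ⟨D, hD⟩ := ContDiff.lipschitzWith_of_hasCompactSupport
    (β.hasCompactSupport.mul_right (f' := fun s => s)) hS one_ne_zero
  refine ⟨D, fun δ hδ => ⟨fun s => δ * (β (δ⁻¹ * s) * (δ⁻¹ * s)),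
    contDiff_const.mul (hS.comp (contDiff_const.mul contDiff_id)),
    LipschitzWith.of_dist_le_mul fun s t => ?_, fun s hs => ?_, fun s hs => ?_⟩⟩
  · have := hD.dist_le_mul (δ⁻¹ * s) (δ⁻¹ * t)
    simp only [Pi.mul_apply, Real.dist_eq, ← mul_sub, abs_mul, abs_inv, abs_of_pos hδ] at this ⊢
    calc _ ≤ δ * (D * (δ⁻¹ * |s - t|)) := by gcongr
      _ = D * |s - t| := by field_simp
  · have : β (δ⁻¹ * s) = 1 := β.one_of_mem_closedBall <| by
      rw [mem_closedBall_zero_iff, Real.norm_eq_abs, abs_mul, abs_inv, abs_of_pos hδ,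
        inv_mul_le_iff₀ hδ]
      simpa [β] using hs.le
    simp only [this]
    field_simp
  · have : β (δ⁻¹ * s) = 0 := β.zero_of_le_dist <| by
      rw [dist_zero_right, Real.norm_eq_abs, abs_mul, abs_inv, abs_of_pos hδ, le_inv_mul_iff₀ hδ,
        mul_comm]
      exact hs.le
    simp [this]

end Smooth

theorem locallyIntegrable_prodMk {X F G : Type*} [TopologicalSpace X] [MeasurableSpace X]
    [NormedAddCommGroup F] [NormedAddCommGroup G] {μ : Measure X} {f : X → F} {g : X → G}
    (hf : LocallyIntegrable f μ) (hg : LocallyIntegrable g μ) :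
    LocallyIntegrable (fun x => (f x, g x)) μ := fun x =>
  let ⟨s, hs, hfs⟩ := hf x
  let ⟨t, ht, hgt⟩ := hg x
  ⟨s ∩ t, inter_mem hs ht,
    (hfs.mono_set inter_subset_left).prodMk (hgt.mono_set inter_subset_right)⟩

theorem eventuallyEq_zero_of_support_subset_fst_preimage {X Y M : Type*} [TopologicalSpace X]
    [TopologicalSpace Y] [Zero M] {W : X × Y → M} {Q : Set X} (hQ : IsClosed Q)
    (hW : Function.support W ⊆ Prod.fst ⁻¹' Q) {x : X} (hx : x ∉ Q) (y : Y) :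
    W =ᶠ[𝓝 (x, y)] 0 := by
  filter_upwards [(hQ.isOpen_compl.preimage continuous_fst).mem_nhds hx] with p hp
  exact Function.notMem_support.1 fun h => hp (hW h)

section GraphPairing

variable {E : Type*} [NormedAddCommGroup E] [NormedSpace ℝ E] [MeasurableSpace E]

/-- The derivative of `W` in the directions `u x` attached to the points `(x, f x)` of the graph of
`f`, integrated over the part of the graph above `Ω`. For `u x = (v x, fderiv ℝ f x (v x))` this is
`∫ x in Ω, v · ∇w` with `w x = W (x, f x)`, see `graphPairing_eq_integral_fderiv_comp`. -/
noncomputable def graphPairing (μ : Measure E) (Ω : Set E) (f : E → ℝ) (u : E → E × ℝ)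
    (W : E × ℝ → ℝ) : ℝ :=
  ∫ x in Ω, fderiv ℝ W (x, f x) (u x) ∂μ

/-- The graph pairing annihilates every `C¹` function supported over a compact subset of `O`. -/
def GraphPairingVanishesOver (μ : Measure E) (Ω : Set E) (f : E → ℝ) (u : E → E × ℝ)
    (O : Set E) : Prop :=
  ∀ Q ⊆ O, IsCompact Q → ∀ W : E × ℝ → ℝ, ContDiff ℝ 1 W →
    Function.support W ⊆ Prod.fst ⁻¹' Q → graphPairing μ Ω f u W = 0

variable {μ : Measure E} {Ω : Set E} {f : E → ℝ} {u : E → E × ℝ} {W W₁ W₂ : E × ℝ → ℝ}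

theorem graphPairing_congr (hΩ : MeasurableSet Ω) (h : ∀ x ∈ Ω, W₁ =ᶠ[𝓝 (x, f x)] W₂) :
    graphPairing μ Ω f u W₁ = graphPairing μ Ω f u W₂ :=
  setIntegral_congr_fun hΩ fun x hx => by simp only [(h x hx).fderiv_eq]

theorem graphPairing_eq_zero_of_eventuallyEq_zero (hΩ : MeasurableSet Ω)
    (h : ∀ x ∈ Ω, W =ᶠ[𝓝 (x, f x)] 0) : graphPairing μ Ω f u W = 0 := by
  rw [graphPairing_congr hΩ h]
  simp [graphPairing]

theorem graphPairing_eq_integral_fderiv_comp {v : E → E} (hΩ : MeasurableSet Ω)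
    (hf : ∀ x ∈ Ω, DifferentiableAt ℝ f x) (hW : Differentiable ℝ W) :
    graphPairing μ Ω f (fun x => (v x, fderiv ℝ f x (v x))) W =
      ∫ x in Ω, fderiv ℝ (fun y => W (y, f y)) x (v x) ∂μ := by
  refine setIntegral_congr_fun hΩ fun x hx => ?_
  have h := (hW (x, f x)).hasFDerivAt.comp x ((hasFDerivAt_id x).prodMk (hf x hx).hasFDerivAt)
  exact (congrArg (· (v x)) h.fderiv).symm

theorem graphPairing_comp_fst {ψ : E → ℝ} (hψ : Differentiable ℝ ψ) :
    graphPairing μ Ω f u (fun p => ψ p.1) = ∫ x in Ω, fderiv ℝ ψ x (u x).1 ∂μ := by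
  have h (p : E × ℝ) := (hψ p.1).hasFDerivAt.comp p hasFDerivAt_fst
  exact integral_congr_ae (Eventually.of_forall fun x => congrArg (· (u x)) (h (x, f x)).fderiv)

theorem graphPairingVanishesOver_compl_closure (hΩ : MeasurableSet Ω) :
    GraphPairingVanishesOver μ Ω f u (closure Ω)ᶜ := fun _ hQ hQc _ _ hsupp =>
  graphPairing_eq_zero_of_eventuallyEq_zero hΩ fun _ hx =>
    eventuallyEq_zero_of_support_subset_fst_preimage hQc.isClosed hsupp
      (fun hxQ => hQ hxQ (subset_closure hx)) _

variable [FiniteDimensional ℝ E]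

theorem GraphPairingVanishesOver.graphPairing_eq_zero {O Q : Set E} (hΩ : MeasurableSet Ω)
    (hO : IsOpen O) (h : GraphPairingVanishesOver μ Ω f u O) (hQ : IsCompact Q) (hQO : Q ⊆ O)
    (hW : ContDiff ℝ 1 W) (hWQ : ∀ x ∈ Ω \ Q, W =ᶠ[𝓝 (x, f x)] 0) :
    graphPairing μ Ω f u W = 0 := by
  obtain ⟨θ, hθ, hθc, hθO, hθ_one⟩ :=
    exists_contDiff_hasCompactSupport_eventuallyEq_one hQ hO hQO
  have hθW : graphPairing μ Ω f u (fun p => θ p.1 * W p) = 0 :=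
    h _ hθO hθc _ ((hθ.comp contDiff_fst).mul hW)
      fun p hp => subset_tsupport _ (left_ne_zero_of_mul hp)
  rw [← hθW]
  refine graphPairing_congr hΩ fun x hx => ?_
  by_cases hxQ : x ∈ Q
  · filter_upwards [continuous_fst.continuousAt.eventually (hθ_one x hxQ)] with p hp
    rw [hp, Pi.one_apply, one_mul]
  · filter_upwards [hWQ x ⟨hx, hxQ⟩] with p hp
    rw [hp, Pi.zero_apply, mul_zero]

variable [BorelSpace E]

theorem integrableOn_fderiv_graph (hΩ : MeasurableSet Ω) (hf : ContinuousOn f (closure Ω))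
    (hu : LocallyIntegrable u (μ.restrict Ω)) {Q : Set E} (hQ : IsCompact Q)
    (hW : ContDiff ℝ 1 W) (hWQ : Function.support W ⊆ Prod.fst ⁻¹' Q) :
    IntegrableOn (fun x => fderiv ℝ W (x, f x) (u x)) Ω μ := by
  have hgraph : ContinuousOn (fun x => fderiv ℝ W (x, f x)) (closure Ω) :=
    (hW.continuous_fderiv one_ne_zero).comp_continuousOn (continuousOn_id.prodMk hf)
  obtain ⟨C, hC⟩ := (hQ.inter_right isClosed_closure).exists_bound_of_continuousOn
    (hgraph.mono inter_subset_right)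
  have hsupp : Function.support (fun x => fderiv ℝ W (x, f x) (u x)) ⊆ Q := by
    refine fun x hx => by_contra fun hxQ => hx ?_
    have := eventuallyEq_zero_of_support_subset_fst_preimage hQ.isClosed hWQ hxQ (f x)
    simp [this.fderiv_eq]
  refine (integrableOn_iff_integrable_of_support_subset hsupp).1 ?_
  refine ((hu.integrableOn_isCompact hQ).norm.const_mul C).mono' ?_ ?_
  · exact (isBoundedBilinearMap_apply.continuous.comp_aestronglyMeasurable
      (((hgraph.mono subset_closure).aestronglyMeasurable hΩ).prodMk
        hu.aestronglyMeasurable)).restrict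
  · filter_upwards [ae_restrict_mem hQ.measurableSet, ae_restrict_of_ae (ae_restrict_mem hΩ)]
      with x hxQ hxΩ
    exact ContinuousLinearMap.le_of_opNorm_le _ (hC x ⟨hxQ, subset_closure hxΩ⟩) _

theorem graphPairing_add (hΩ : MeasurableSet Ω) (hf : ContinuousOn f (closure Ω))
    (hu : LocallyIntegrable u (μ.restrict Ω)) {Q₁ Q₂ : Set E} (hQ₁ : IsCompact Q₁)
    (hW₁ : ContDiff ℝ 1 W₁) (hWQ₁ : Function.support W₁ ⊆ Prod.fst ⁻¹' Q₁) (hQ₂ : IsCompact Q₂)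
    (hW₂ : ContDiff ℝ 1 W₂) (hWQ₂ : Function.support W₂ ⊆ Prod.fst ⁻¹' Q₂) :
    graphPairing μ Ω f u (W₁ + W₂) =
      graphPairing μ Ω f u W₁ + graphPairing μ Ω f u W₂ := by
  unfold graphPairing
  rw [← integral_add (integrableOn_fderiv_graph hΩ hf hu hQ₁ hW₁ hWQ₁)
    (integrableOn_fderiv_graph hΩ hf hu hQ₂ hW₂ hWQ₂)]
  refine integral_congr_ae (Eventually.of_forall fun x => ?_)
  simp only [fderiv_add (hW₁.differentiable one_ne_zero _)
    (hW₂.differentiable one_ne_zero _), add_apply]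

theorem GraphPairingVanishesOver.union (hΩ : MeasurableSet Ω) (hf : ContinuousOn f (closure Ω))
    (hu : LocallyIntegrable u (μ.restrict Ω)) {O₁ O₂ : Set E} (hO₁ : IsOpen O₁) (hO₂ : IsOpen O₂)
    (h₁ : GraphPairingVanishesOver μ Ω f u O₁) (h₂ : GraphPairingVanishesOver μ Ω f u O₂) :
    GraphPairingVanishesOver μ Ω f u (O₁ ∪ O₂) := by
  intro Q hQ hQc W hW hWQ
  obtain ⟨θ, hθ, hθc, hθO, hθ_one⟩ := exists_contDiff_hasCompactSupport_eventuallyEq_one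
    (hQc.diff hO₂) hO₁ fun x hx => (hQ hx.1).resolve_right hx.2
  let Q₂ := Q \ interior {x | θ x = 1}
  have hQ₂ : IsCompact Q₂ := hQc.diff isOpen_interior
  have hQ₂O : Q₂ ⊆ O₂ := fun x hx => by_contra fun hxO =>
    hx.2 (mem_interior_iff_mem_nhds.2 (hθ_one x ⟨hx.1, hxO⟩))
  have hW₁ : ContDiff ℝ 1 fun p : E × ℝ => θ p.1 * W p := (hθ.comp contDiff_fst).mul hW
  have hW₂ : ContDiff ℝ 1 fun p : E × ℝ => (1 - θ p.1) * W p :=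
    (contDiff_const.sub (hθ.comp contDiff_fst)).mul hW
  have hWQ₁ : (Function.support fun p : E × ℝ => θ p.1 * W p) ⊆ Prod.fst ⁻¹' tsupport θ :=
    fun p hp => subset_tsupport _ (left_ne_zero_of_mul hp)
  have hWQ₂ : (Function.support fun p : E × ℝ => (1 - θ p.1) * W p) ⊆ Prod.fst ⁻¹' Q₂ :=
    fun p hp => ⟨hWQ (right_ne_zero_of_mul hp), fun hpθ =>
      left_ne_zero_of_mul hp (sub_eq_zero.2 (interior_subset hpθ).symm)⟩
  have hsum : W = (fun p => θ p.1 * W p) + fun p => (1 - θ p.1) * W p := by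
    ext p
    simp only [Pi.add_apply]
    ring
  rw [hsum, graphPairing_add hΩ hf hu hθc hW₁ hWQ₁ hQ₂ hW₂ hWQ₂, h₁ _ hθO hθc _ hW₁ hWQ₁,
    h₂ _ hQ₂O hQ₂ _ hW₂ hWQ₂, add_zero]

theorem GraphPairingVanishesOver.sUnion (hΩ : MeasurableSet Ω) (hf : ContinuousOn f (closure Ω))
    (hu : LocallyIntegrable u (μ.restrict Ω)) {S : Set (Set E)} (hS : ∀ O ∈ S, IsOpen O)
    (h : ∀ O ∈ S, GraphPairingVanishesOver μ Ω f u O) :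
    GraphPairingVanishesOver μ Ω f u (⋃₀ S) := by
  intro Q hQ hQc
  obtain ⟨O, hQO, -, hO⟩ :
      ∃ O, Q ⊆ O ∧ IsOpen O ∧ GraphPairingVanishesOver μ Ω f u O := by
    refine hQc.induction_on (p := fun s =>
      ∃ O, s ⊆ O ∧ IsOpen O ∧ GraphPairingVanishesOver μ Ω f u O)
      ⟨(closure Ω)ᶜ, empty_subset _, isClosed_closure.isOpen_compl,
        graphPairingVanishesOver_compl_closure hΩ⟩ ?_ ?_ fun x hx => ?_
    · rintro s t hst ⟨O, htO, hO⟩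
      exact ⟨O, hst.trans htO, hO⟩
    · rintro s t ⟨O₁, hsO, hO₁, h₁⟩ ⟨O₂, htO, hO₂, h₂⟩
      exact ⟨O₁ ∪ O₂, union_subset_union hsO htO, hO₁.union hO₂, h₁.union hΩ hf hu hO₁ hO₂ h₂⟩
    · obtain ⟨O, hOS, hxO⟩ := hQ hx
      exact ⟨O, mem_nhdsWithin_of_mem_nhds ((hS O hOS).mem_nhds hxO), O, subset_rfl, hS O hOS,
        h O hOS⟩
  exact hO Q hQO hQc

end GraphPairing

section GraphCollapse

variable {E : Type*}

/-- The map of `E × ℝ` that moves the point `s` of the fibre over `x` to `h x + σ (s - h x)`. When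
`σ` truncates the identity, this is the identity near the graph of `h` and it collapses the points
far from the graph onto the graph. -/
def graphCollapse (h : E → ℝ) (σ : ℝ → ℝ) (p : E × ℝ) : E × ℝ :=
  (p.1, h p.1 + σ (p.2 - h p.1))

theorem support_comp_graphCollapse_subset {M : Type*} [Zero M] {W : E × ℝ → M} {Q : Set E}
    (hW : Function.support W ⊆ Prod.fst ⁻¹' Q) (h : E → ℝ) (σ : ℝ → ℝ) :
    Function.support (W ∘ graphCollapse h σ) ⊆ Prod.fst ⁻¹' Q := fun p hp =>
  @hW (graphCollapse h σ p) hp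

variable [NormedAddCommGroup E]

theorem contDiff_graphCollapse [NormedSpace ℝ E] {h : E → ℝ} {σ : ℝ → ℝ} (hh : ContDiff ℝ 1 h)
    (hσ : ContDiff ℝ 1 σ) : ContDiff ℝ 1 (graphCollapse h σ) := by
  unfold graphCollapse
  fun_prop

theorem lipschitzWith_graphCollapse {h : E → ℝ} {σ : ℝ → ℝ} {C D : ℝ≥0} (hh : LipschitzWith C h)
    (hσ : LipschitzWith D σ) : LipschitzWith (max 1 (C + D * (1 + C))) (graphCollapse h σ) := by
  have hfst := hh.comp (LipschitzWith.prod_fst (α := E) (β := ℝ))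
  rw [mul_one] at hfst
  exact LipschitzWith.prod_fst.prodMk (hfst.add (hσ.comp (LipschitzWith.prod_snd.sub hfst)))

theorem graphCollapse_eventuallyEq_id {h : E → ℝ} {σ : ℝ → ℝ} {δ : ℝ} (hh : Continuous h)
    (hσ : ∀ s, |s| < δ → σ s = s) {p : E × ℝ} (hp : |p.2 - h p.1| < δ) :
    graphCollapse h σ =ᶠ[𝓝 p] id := by
  have : Continuous fun q : E × ℝ => |q.2 - h q.1| := by fun_prop
  filter_upwards [this.continuousAt.eventually_lt_const hp] with q hq
  simp [graphCollapse, hσ _ hq]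

theorem graphCollapse_eventuallyEq_zero {h : E → ℝ} {σ : ℝ → ℝ} {δ : ℝ} (hh : Continuous h)
    (hσ : ∀ s, δ < |s| → σ s = 0) {p : E × ℝ} (hp : δ < |p.2 - h p.1|) :
    graphCollapse h σ =ᶠ[𝓝 p] graphCollapse h 0 := by
  have : Continuous fun q : E × ℝ => |q.2 - h q.1| := by fun_prop
  filter_upwards [this.continuousAt.eventually_const_lt hp] with q hq
  simp [graphCollapse, hσ _ hq]

end GraphCollapse

section TestFunctions

variable {E : Type*} [NormedAddCommGroup E] [NormedSpace ℝ E] {Ω : Set E} {f : E → ℝ}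
  {W : E × ℝ → ℝ} {Q V : Set E}

theorem exists_hasCompactSupport_eventuallyEq_graph (hf : ContinuousOn f (closure Ω))
    (hQ : IsCompact Q) (hW : ContDiff ℝ 1 W) (hWQ : Function.support W ⊆ Prod.fst ⁻¹' Q) :
    ∃ W' : E × ℝ → ℝ, ContDiff ℝ 1 W' ∧ HasCompactSupport W' ∧
      Function.support W' ⊆ Prod.fst ⁻¹' Q ∧ ∀ x ∈ Ω, W' =ᶠ[𝓝 (x, f x)] W := by
  have hfQ : IsCompact (f '' (Q ∩ closure Ω)) :=
    (hQ.inter_right isClosed_closure).image_of_continuousOn (hf.mono inter_subset_right)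
  obtain ⟨χ, hχ, hχc, -, hχ_one⟩ :=
    exists_contDiff_hasCompactSupport_eventuallyEq_one hfQ isOpen_univ (subset_univ _)
  have hsupp : Function.support (fun p : E × ℝ => χ p.2 * W p) ⊆ Prod.fst ⁻¹' Q :=
    fun p hp => hWQ (right_ne_zero_of_mul hp)
  refine ⟨fun p => χ p.2 * W p, (hχ.comp contDiff_snd).mul hW, ?_, hsupp, fun x hx => ?_⟩
  · refine HasCompactSupport.intro (hQ.prod hχc) fun p hp => by_contra fun hpW => hp ?_
    exact ⟨hsupp hpW, subset_tsupport _ (left_ne_zero_of_mul hpW)⟩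
  · by_cases hxQ : x ∈ Q
    · have hfx := hχ_one _ (mem_image_of_mem f ⟨hxQ, subset_closure hx⟩)
      filter_upwards [continuous_snd.continuousAt.eventually hfx] with p hp
      rw [hp, Pi.one_apply, one_mul]
    · exact (eventuallyEq_zero_of_support_subset_fst_preimage hQ.isClosed hsupp hxQ _).trans
        (eventuallyEq_zero_of_support_subset_fst_preimage hQ.isClosed hWQ hxQ _).symm

variable [MeasurableSpace E] {μ : Measure E} {u : E → E × ℝ}

theorem graphPairing_comp_graphCollapse_zero
    (hbase : ∀ ψ : E → ℝ, ContDiff ℝ 1 ψ → HasCompactSupport ψ →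
      ∫ x in Ω, fderiv ℝ ψ x (u x).1 ∂μ = 0)
    (hQ : IsCompact Q) (hW : ContDiff ℝ 1 W) (hWQ : Function.support W ⊆ Prod.fst ⁻¹' Q)
    {h : E → ℝ} (hh : ContDiff ℝ 1 h) :
    graphPairing μ Ω f u (W ∘ graphCollapse h 0) = 0 := by
  have hψ : ContDiff ℝ 1 fun x => W (x, h x) := hW.comp (contDiff_id.prodMk hh)
  have hψ_comp : W ∘ graphCollapse h 0 = fun p => W (p.1, h p.1) := by
    ext p
    simp [graphCollapse]
  rw [hψ_comp, graphPairing_comp_fst (ψ := fun x => W (x, h x)) (hψ.differentiable one_ne_zero)]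
  exact hbase _ hψ (HasCompactSupport.intro hQ fun x hx => by_contra fun hxW => hx (hWQ hxW))

theorem graphPairingVanishesOver_self [BorelSpace E] {v : E → E} (hΩ : IsOpen Ω)
    (hf : ContDiffOn ℝ 1 f Ω)
    (hbase : ∀ ψ : E → ℝ, ContDiff ℝ 1 ψ → HasCompactSupport ψ →
      ∫ x in Ω, fderiv ℝ ψ x (v x) ∂μ = 0) :
    GraphPairingVanishesOver μ Ω f (fun x => (v x, fderiv ℝ f x (v x))) Ω := by
  have hf_at (x : E) (hx : x ∈ Ω) : ContDiffAt ℝ 1 f x := hf.contDiffAt (hΩ.mem_nhds hx)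
  intro Q hQ hQc W hW hWQ
  rw [graphPairing_eq_integral_fderiv_comp hΩ.measurableSet
    (fun x hx => (hf_at x hx).differentiableAt one_ne_zero) (hW.differentiable one_ne_zero)]
  have hW_off : ∀ x ∉ Q, W (x, f x) = 0 := fun x hx => by_contra fun hxW => hx (hWQ hxW)
  refine hbase _ (contDiff_iff_contDiffAt.2 fun x => ?_) (HasCompactSupport.intro hQc hW_off)
  by_cases hx : x ∈ Q
  · exact hW.contDiffAt.comp x (contDiffAt_id.prodMk (hf_at x (hQ hx)))
  · exact contDiffAt_const.congr_of_eventuallyEq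
      (eventually_of_mem (hQc.isClosed.isOpen_compl.mem_nhds hx) hW_off)

variable [FiniteDimensional ℝ E]

theorem GraphPairingVanishesOver.graphPairing_sub_comp_graphCollapse (hΩ : MeasurableSet Ω)
    (hf : ContinuousOn f (closure Ω)) (hV : IsOpen V) (hVan : GraphPairingVanishesOver μ Ω f u V)
    (hQ : IsCompact Q) (hW : ContDiff ℝ 1 W) (hWQ : Function.support W ⊆ Prod.fst ⁻¹' Q)
    {h : E → ℝ} {σ : ℝ → ℝ} {δ : ℝ} (hh : ContDiff ℝ 1 h) (hσ : ContDiff ℝ 1 σ)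
    (hσ_id : ∀ s, |s| < δ → σ s = s) (hfh : ∀ x ∈ (Q ∩ closure Ω) \ V, |f x - h x| < δ) :
    graphPairing μ Ω f u (W - W ∘ graphCollapse h σ) = 0 := by
  have hQΩ : IsCompact (Q ∩ closure Ω) := hQ.inter_right isClosed_closure
  have hfh_cont : ContinuousOn (fun x => |f x - h x|) (Q ∩ closure Ω) :=
    ((hf.mono inter_subset_right).sub hh.continuous.continuousOn).abs
  have hfar : IsCompact {x ∈ Q ∩ closure Ω | δ ≤ |f x - h x|} :=
    hQΩ.of_isClosed_subset (hfh_cont.preimage_isClosed_of_isClosed hQΩ.isClosed isClosed_Ici)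
      fun x hx => hx.1
  refine hVan.graphPairing_eq_zero hΩ hV hfar
    (fun x hx => by_contra fun hxV => hx.2.not_gt (hfh x ⟨hx.1, hxV⟩))
    (hW.sub (hW.comp (contDiff_graphCollapse hh hσ))) ?_
  rintro x ⟨hx, hx_near⟩
  by_cases hxQ : x ∈ Q
  · have hlt : |f x - h x| < δ := not_le.1 fun hle => hx_near ⟨⟨hxQ, subset_closure hx⟩, hle⟩
    filter_upwards [graphCollapse_eventuallyEq_id (p := (x, f x)) hh.continuous hσ_id hlt]
      with p hp
    simp [hp]
  · exact eventuallyEq_zero_of_support_subset_fst_preimage hQ.isClosed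
      ((Function.support_sub _ _).trans
        (union_subset hWQ (support_comp_graphCollapse_subset hWQ h σ))) hxQ _

variable [BorelSpace E]

theorem tendsto_graphPairing_zero (hΩ : MeasurableSet Ω) (hf : ContinuousOn f (closure Ω))
    (hu : LocallyIntegrable u (μ.restrict Ω)) (hQ : IsCompact Q) {G : ℕ → E × ℝ → ℝ} {L : ℝ≥0}
    (hG : ∀ k, ContDiff ℝ 1 (G k)) (hGL : ∀ k, LipschitzWith L (G k))
    (hGQ : ∀ k, Function.support (G k) ⊆ Prod.fst ⁻¹' Q)
    (hG_zero : ∀ x ∈ Ω ∩ Q, ∀ᶠ k in atTop, G k =ᶠ[𝓝 (x, f x)] 0) :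
    Tendsto (fun k => graphPairing μ Ω f u (G k)) atTop (𝓝 0) := by
  have hbound : Integrable (Q.indicator fun x => L * ‖u x‖) (μ.restrict Ω) :=
    (integrable_indicator_iff hQ.measurableSet).2
      ((hu.integrableOn_isCompact hQ).norm.const_mul _)
  have hoff {x : E} (hx : x ∉ Q) (k : ℕ) : G k =ᶠ[𝓝 (x, f x)] 0 :=
    eventuallyEq_zero_of_support_subset_fst_preimage hQ.isClosed (hGQ k) hx _
  rw [← integral_zero E ℝ (μ := μ.restrict Ω)]
  refine tendsto_integral_of_dominated_convergence _
    (fun k => (integrableOn_fderiv_graph hΩ hf hu hQ (hG k) (hGQ k)).aestronglyMeasurable)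
    hbound (fun k => Eventually.of_forall fun x => ?_) ?_
  · by_cases hx : x ∈ Q
    · rw [indicator_of_mem hx]
      exact ContinuousLinearMap.le_of_opNorm_le _ (norm_fderiv_le_of_lipschitz ℝ (hGL k)) _
    · simp [indicator_of_notMem hx, (hoff hx k).fderiv_eq]
  · filter_upwards [ae_restrict_mem hΩ] with x hx
    have hzero : ∀ᶠ k in atTop, G k =ᶠ[𝓝 (x, f x)] 0 := by
      by_cases hxQ : x ∈ Q
      · exact hG_zero x ⟨hx, hxQ⟩
      · exact Eventually.of_forall (hoff hxQ)
    exact tendsto_const_nhds.congr' (hzero.mono fun k hk => by simp [hk.fderiv_eq])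

theorem graphPairing_eq_graphPairing_graphCollapse_sub (hΩ : MeasurableSet Ω)
    (hf : ContinuousOn f (closure Ω)) (hu : LocallyIntegrable u (μ.restrict Ω))
    (hbase : ∀ ψ : E → ℝ, ContDiff ℝ 1 ψ → HasCompactSupport ψ →
      ∫ x in Ω, fderiv ℝ ψ x (u x).1 ∂μ = 0)
    (hV : IsOpen V) (hVan : GraphPairingVanishesOver μ Ω f u V)
    (hQ : IsCompact Q) (hW : ContDiff ℝ 1 W) (hWQ : Function.support W ⊆ Prod.fst ⁻¹' Q)
    {h : E → ℝ} {σ : ℝ → ℝ} {δ : ℝ} (hh : ContDiff ℝ 1 h) (hσ : ContDiff ℝ 1 σ)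
    (hσ_id : ∀ s, |s| < δ → σ s = s) (hfh : ∀ x ∈ (Q ∩ closure Ω) \ V, |f x - h x| < δ) :
    graphPairing μ Ω f u W =
      graphPairing μ Ω f u (W ∘ graphCollapse h σ - W ∘ graphCollapse h 0) := by
  have hWσ := hW.comp (contDiff_graphCollapse hh hσ)
  have hW0 := hW.comp (contDiff_graphCollapse hh (σ := 0) contDiff_const)
  have hsupp (σ' : ℝ → ℝ) := support_comp_graphCollapse_subset hWQ h σ'
  have hsupp_sub {F G : E × ℝ → ℝ} (hF : Function.support F ⊆ Prod.fst ⁻¹' Q)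
      (hG : Function.support G ⊆ Prod.fst ⁻¹' Q) : Function.support (F - G) ⊆ Prod.fst ⁻¹' Q :=
    (Function.support_sub F G).trans (union_subset hF hG)
  calc graphPairing μ Ω f u W
      = graphPairing μ Ω f u ((W - W ∘ graphCollapse h σ) + W ∘ graphCollapse h σ) := by
        rw [sub_add_cancel]
    _ = graphPairing μ Ω f u (W ∘ graphCollapse h σ) := by
        rw [graphPairing_add (W₁ := W - _) hΩ hf hu hQ (hW.sub hWσ)
          (hsupp_sub hWQ (hsupp σ)) hQ hWσ (hsupp σ),
          hVan.graphPairing_sub_comp_graphCollapse hΩ hf hV hQ hW hWQ hh hσ hσ_id hfh, zero_add]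
    _ = graphPairing μ Ω f u
          ((W ∘ graphCollapse h σ - W ∘ graphCollapse h 0) + W ∘ graphCollapse h 0) := by
        rw [sub_add_cancel]
    _ = graphPairing μ Ω f u (W ∘ graphCollapse h σ - W ∘ graphCollapse h 0) := by
        rw [graphPairing_add (W₁ := _ - _) hΩ hf hu hQ (hWσ.sub hW0)
          (hsupp_sub (hsupp σ) (hsupp 0)) hQ hW0 (hsupp 0),
          graphPairing_comp_graphCollapse_zero hbase hQ hW hWQ hh, add_zero]

theorem graphPairing_eq_zero_of_barrier (hΩ : MeasurableSet Ω)
    (hf : ContinuousOn f (closure Ω)) (hu : LocallyIntegrable u (μ.restrict Ω))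
    (hbase : ∀ ψ : E → ℝ, ContDiff ℝ 1 ψ → HasCompactSupport ψ →
      ∫ x in Ω, fderiv ℝ ψ x (u x).1 ∂μ = 0)
    (hV : IsOpen V) (hVan : GraphPairingVanishesOver μ Ω f u V)
    {H : E → ℝ} {A L : ℝ≥0} (hH : LipschitzWith A H) (hHf : EqOn H f ((Q ∩ closure Ω) \ V))
    (hfH : ∀ x ∈ Ω ∩ Q, f x < H x) (hQ : IsCompact Q) (hW : ContDiff ℝ 1 W)
    (hL : LipschitzWith L W) (hWQ : Function.support W ⊆ Prod.fst ⁻¹' Q) :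
    graphPairing μ Ω f u W = 0 := by
  -- `H` is mollified to `h k`, and the points at distance more than `2 * δ k` from the graph of
  -- `h k` are collapsed onto it. Along the graph of `f` this alters `W` only over `V`, and the
  -- collapse is eventually complete at each point of it above `Ω`.
  obtain ⟨D, hD⟩ := exists_contDiff_lipschitzWith_truncation
  let δ : ℕ → ℝ := fun k => 1 / (k + 1)
  have hδ (k : ℕ) : 0 < δ k := Nat.one_div_pos_of_nat
  have hδ_lim : Tendsto (fun k => 3 * δ k) atTop (𝓝 0) := by
    simpa only [mul_zero] using (tendsto_one_div_add_atTop_nhds_zero_nat (𝕜 := ℝ)).const_mul 3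
  choose σ hσ hσL hσ_id hσ_zero using fun k => hD (δ k) (hδ k)
  choose h hh hhL hhH using fun k => exists_contDiff_lipschitzWith_dist_le hH (half_pos (hδ k))
  have hcollapse (k : ℕ) : graphPairing μ Ω f u W = graphPairing μ Ω f u
      (W ∘ graphCollapse (h k) (σ k) - W ∘ graphCollapse (h k) 0) := by
    refine graphPairing_eq_graphPairing_graphCollapse_sub hΩ hf hu hbase hV hVan hQ hW hWQ
      (hh k) (hσ k) (hσ_id k) fun x hx => ?_
    rw [← hHf hx, abs_sub_comm, ← Real.dist_eq]
    exact (hhH k x).trans_lt (half_lt_self (hδ k))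
  refine tendsto_nhds_unique (tendsto_const_nhds.congr hcollapse)
    (tendsto_graphPairing_zero hΩ hf hu hQ (fun k => ?_)
      (fun k => (hL.comp (lipschitzWith_graphCollapse (hhL k) (hσL k))).sub
        (hL.comp (lipschitzWith_graphCollapse (hhL k) (LipschitzWith.const 0))))
      (fun k => ?_) fun x hx => ?_)
  · exact (hW.comp (contDiff_graphCollapse (hh k) (hσ k))).sub
      (hW.comp (contDiff_graphCollapse (hh k) contDiff_const))
  · exact (Function.support_sub _ _).trans (union_subset
      (support_comp_graphCollapse_subset hWQ _ _) (support_comp_graphCollapse_subset hWQ _ _))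
  · filter_upwards [hδ_lim.eventually_lt_const (sub_pos.2 (hfH x hx))] with k hk
    have hfar : 2 * δ k < |f x - h k x| := by
      have := (abs_le.1 (hhH k x)).1
      rw [abs_sub_comm]
      exact lt_of_lt_of_le (by linarith [hδ k]) (le_abs_self _)
    filter_upwards [graphCollapse_eventuallyEq_zero (p := (x, f x)) (hh k).continuous
      (hσ_zero k) hfar] with p hp
    simp [hp]

theorem graphPairing_eq_zero_of_dist_le (hΩ : MeasurableSet Ω)
    (hf : ContinuousOn f (closure Ω)) (hu : LocallyIntegrable u (μ.restrict Ω))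
    (hbase : ∀ ψ : E → ℝ, ContDiff ℝ 1 ψ → HasCompactSupport ψ →
      ∫ x in Ω, fderiv ℝ ψ x (u x).1 ∂μ = 0)
    (hV : IsOpen V) (hVan : GraphPairingVanishesOver μ Ω f u V) (hΩV : Ω ⊆ V)
    (hVc : Vᶜ ⊆ closure Ω) (hQ : IsCompact Q) (hQV : (Q \ V).Nonempty) {C : ℝ≥0}
    (hC : ∀ x ∈ Q \ V, ∀ y ∈ Q ∩ closure Ω, dist (f y) (f x) ≤ C * dist y x)
    (hW : ContDiff ℝ 1 W) (hWQ : Function.support W ⊆ Prod.fst ⁻¹' Q) :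
    graphPairing μ Ω f u W = 0 := by
  obtain ⟨W', hW', hWc', hWQ', hWW'⟩ := exists_hasCompactSupport_eventuallyEq_graph hf hQ hW hWQ
  obtain ⟨L, hL⟩ := hW'.lipschitzWith_of_hasCompactSupport hWc' one_ne_zero
  obtain ⟨A, H, hH, hHf, hfH⟩ := exists_lipschitzWith_eqOn_lt (K := Q ∩ closure Ω) (hQ.diff hV)
    hQV (fun x hx => ⟨hx.1, hVc hx.2⟩) hC
  rw [← graphPairing_congr hΩ hWW']
  exact graphPairing_eq_zero_of_barrier hΩ hf hu hbase hV hVan hH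
    (fun x hx => hHf ⟨hx.1.1, hx.2⟩)
    (fun x hx => hfH x ⟨⟨hx.2, subset_closure hx.1⟩, fun hxV => hxV.2 (hΩV hx.1)⟩) hQ hW' hL hWQ'

theorem graphPairingVanishesOver_univ (hΩ : IsOpen Ω) (hf : ContinuousOn f (closure Ω))
    (hf_isBigO : ∀ x ∈ closure Ω, (fun y => f y - f x) =O[𝓝[closure Ω] x] fun y => y - x)
    (hu : LocallyIntegrable u (μ.restrict Ω))
    (hbase : ∀ ψ : E → ℝ, ContDiff ℝ 1 ψ → HasCompactSupport ψ →
      ∫ x in Ω, fderiv ℝ ψ x (u x).1 ∂μ = 0)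
    (hΩ_van : GraphPairingVanishesOver μ Ω f u Ω) :
    GraphPairingVanishesOver μ Ω f u univ := by
  let S : Set (Set E) := {O | IsOpen O ∧ GraphPairingVanishesOver μ Ω f u O}
  have hV_open : IsOpen (⋃₀ S) := isOpen_sUnion fun O hO => hO.1
  have hV_van : GraphPairingVanishesOver μ Ω f u (⋃₀ S) :=
    GraphPairingVanishesOver.sUnion hΩ.measurableSet hf hu (fun O hO => hO.1) fun O hO => hO.2
  have hΩV : Ω ⊆ ⋃₀ S := subset_sUnion_of_mem ⟨hΩ, hΩ_van⟩
  have hVc : (⋃₀ S)ᶜ ⊆ closure Ω := compl_subset_comm.1 <| subset_sUnion_of_mem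
    ⟨isClosed_closure.isOpen_compl, graphPairingVanishesOver_compl_closure hΩ.measurableSet⟩
  rcases (⋃₀ S)ᶜ.eq_empty_or_nonempty with hempty | hne
  · rwa [compl_empty_iff.1 hempty] at hV_van
  obtain ⟨x₀, hx₀, r, hr, C, hC⟩ := exists_ball_forall_dist_le_of_isBigO hf
    hV_open.isClosed_compl.isComplete hne hVc fun x hx => by
      simpa only [dist_eq_norm] using (hf_isBigO x (hVc hx)).norm_norm
  suffices hball : GraphPairingVanishesOver μ Ω f u (ball x₀ r) from
    absurd (subset_sUnion_of_mem (show ball x₀ r ∈ S from ⟨isOpen_ball, hball⟩)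
      (mem_ball_self hr)) hx₀
  intro Q hQ hQc W hW hWQ
  by_cases hQV : Q ⊆ ⋃₀ S
  · exact hV_van Q hQV hQc W hW hWQ
  · exact graphPairing_eq_zero_of_dist_le hΩ.measurableSet hf hu hbase hV_open hV_van hΩV hVc
      hQc (sdiff_nonempty.2 hQV) (fun x hx y hy => hC x ⟨hx.2, hQ hx.1⟩ y ⟨hy.2, hQ hy.1⟩) hW hWQ

theorem integral_fderiv_eq_zero_of_forall_contDiff {v : E → E} (hΩ : IsOpen Ω)
    (hQ : IsCompact Q) (hfQ : ∀ x ∈ Ω \ Q, f x = 0) (hf : DifferentiableOn ℝ f (closure Ω))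
    (hfΩ : ContDiffOn ℝ 1 f Ω) (hv : LocallyIntegrable v (μ.restrict Ω))
    (hfv : LocallyIntegrable (fun x => fderiv ℝ f x (v x)) (μ.restrict Ω))
    (hbase : ∀ ψ : E → ℝ, ContDiff ℝ 1 ψ → HasCompactSupport ψ →
      ∫ x in Ω, fderiv ℝ ψ x (v x) ∂μ = 0) :
    ∫ x in Ω, fderiv ℝ f x (v x) ∂μ = 0 := by
  have hf_diff (x : E) (hx : x ∈ Ω) : DifferentiableAt ℝ f x :=
    (hfΩ.contDiffAt (hΩ.mem_nhds hx)).differentiableAt one_ne_zero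
  obtain ⟨θ, hθ, hθc, -, hθ_one⟩ :=
    exists_contDiff_hasCompactSupport_eventuallyEq_one hQ isOpen_univ (subset_univ _)
  have hW : ContDiff ℝ 1 fun p : E × ℝ => θ p.1 * p.2 := (hθ.comp contDiff_fst).mul contDiff_snd
  have hθf : ∀ x ∈ Ω, θ x * f x = f x := fun x hx => by
    by_cases hxQ : x ∈ Q
    · rw [(hθ_one x hxQ).eq_of_nhds, Pi.one_apply, one_mul]
    · rw [hfQ x ⟨hx, hxQ⟩, mul_zero]
  have hpair := graphPairingVanishesOver_univ hΩ hf.continuousOn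
    (fun x hx => (hf x hx).isBigO_sub) (locallyIntegrable_prodMk hv hfv) hbase
    (graphPairingVanishesOver_self hΩ hfΩ hbase) _ (subset_univ _) hθc _ hW
    fun p hp => subset_tsupport _ (left_ne_zero_of_mul hp)
  rw [graphPairing_eq_integral_fderiv_comp hΩ.measurableSet hf_diff
    (hW.differentiable one_ne_zero)] at hpair
  rw [← hpair]
  refine setIntegral_congr_fun hΩ.measurableSet fun x hx => ?_
  have : f =ᶠ[𝓝 x] fun y => θ y * f y :=
    eventually_of_mem (hΩ.mem_nhds hx) fun y hy => (hθf y hy).symm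
  simp only [this.fderiv_eq]

end TestFunctions

section Slicing

variable {n : ℕ} {Ω : Set (Fin (n + 1) → ℝ)} {F : (Fin (n + 1) → ℝ) → ℝ}

theorem measurePreserving_snoc (n : ℕ) :
    MeasurePreserving fun p : ℝ × (Fin n → ℝ) => (Fin.snoc p.2 p.1 : Fin (n + 1) → ℝ) := by
  have h := (volume_preserving_piFinSuccAbove (fun _ : Fin (n + 1) => ℝ) (Fin.last n)).symm
  convert h using 2 with p
  exact (Fin.insertNth_last' p.1 p.2).symm

theorem measurableEmbedding_snoc (n : ℕ) :
    MeasurableEmbedding fun p : ℝ × (Fin n → ℝ) => (Fin.snoc p.2 p.1 : Fin (n + 1) → ℝ) := by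
  convert (MeasurableEquiv.piFinSuccAbove (fun _ => ℝ) (Fin.last n)).symm.measurableEmbedding
    using 2 with p
  exact (Fin.insertNth_last' p.1 p.2).symm

theorem integrable_indicator_comp_snoc (hΩ : MeasurableSet Ω) (hF : IntegrableOn F Ω) :
    Integrable (fun p : ℝ × (Fin n → ℝ) => Ω.indicator F (Fin.snoc p.2 p.1))
      (volume.prod volume) :=
  (measurePreserving_snoc n).integrable_comp_of_integrable ((integrable_indicator_iff hΩ).2 hF)

theorem setIntegral_snoc_preimage (hΩ : MeasurableSet Ω) (t : ℝ) :
    ∫ x', Ω.indicator F (Fin.snoc x' t) =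
      ∫ x' in (fun x' => Fin.snoc x' t) ⁻¹' Ω, F (Fin.snoc x' t) :=
  integral_indicator (((measurableEmbedding_snoc n).measurable.comp measurable_prodMk_left) hΩ)

theorem integrable_setIntegral_snoc (hΩ : MeasurableSet Ω) (hF : IntegrableOn F Ω) :
    Integrable fun t => ∫ x' in (fun x' => Fin.snoc x' t) ⁻¹' Ω, F (Fin.snoc x' t) := by
  simpa only [setIntegral_snoc_preimage hΩ] using
    (integrable_indicator_comp_snoc hΩ hF).integral_prod_left

theorem setIntegral_eq_integral_setIntegral_snoc (hΩ : MeasurableSet Ω) (hF : IntegrableOn F Ω) :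
    ∫ x in Ω, F x = ∫ t, ∫ x' in (fun x' => Fin.snoc x' t) ⁻¹' Ω, F (Fin.snoc x' t) := by
  rw [← integral_indicator hΩ, ← (measurePreserving_snoc n).integral_comp
    (measurableEmbedding_snoc n), Measure.volume_eq_prod,
    integral_prod _ (integrable_indicator_comp_snoc hΩ hF)]
  simp only [setIntegral_snoc_preimage hΩ]

theorem abs_setIntegral_mul_le_of_abs_setIntegral_snoc_le {G : (Fin (n + 1) → ℝ) → ℝ} {a : ℝ → ℝ}
    {B κ : ℝ} (hΩ : MeasurableSet Ω)
    (haF : IntegrableOn (fun x => a (x (Fin.last n)) * F x) Ω) (hG : IntegrableOn G Ω)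
    (ha : ∀ t, |a t| ≤ B)
    (hFG : ∀ t, |∫ x' in (fun x' => Fin.snoc x' t) ⁻¹' Ω, F (Fin.snoc x' t)| ≤
      κ * ∫ x' in (fun x' => Fin.snoc x' t) ⁻¹' Ω, G (Fin.snoc x' t)) :
    |∫ x in Ω, a (x (Fin.last n)) * F x| ≤ B * κ * ∫ x in Ω, G x := by
  rw [setIntegral_eq_integral_setIntegral_snoc hΩ haF,
    setIntegral_eq_integral_setIntegral_snoc hΩ hG]
  simp only [Fin.snoc_last, integral_const_mul]
  rw [← integral_const_mul, ← Real.norm_eq_abs]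
  refine norm_integral_le_of_norm_le ((integrable_setIntegral_snoc hΩ hG).const_mul (B * κ))
    (Eventually.of_forall fun t => ?_)
  rw [Real.norm_eq_abs, abs_mul, mul_assoc]
  exact mul_le_mul (ha t) (hFG t) (abs_nonneg _) ((abs_nonneg _).trans (ha t))

end Slicing

theorem abs_integral_mul_le_of_integral_eq_zero {X : Type*} [MeasurableSpace X] {μ : Measure X}
    [IsFiniteMeasure μ] {φ q : X → ℝ} (hφ : MemLp φ 2 μ) (hq : MemLp q 2 μ)
    (hq_zero : ∫ x, q x ∂μ = 0) (m : ℝ) :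
    |∫ x, φ x * q x ∂μ| ≤ (∫ x, (φ x - m) ^ 2 ∂μ + ∫ x, q x ^ 2 ∂μ) / 2 := by
  have hφm : MemLp (fun x => φ x - m) 2 μ := hφ.sub (memLp_const m)
  have hφq : Integrable (fun x => φ x * q x) μ := hφ.integrable_mul hq
  have hmean : ∫ x, φ x * q x ∂μ = ∫ x, (φ x - m) * q x ∂μ := by
    simp only [sub_mul]
    rw [integral_sub hφq ((hq.integrable one_le_two).const_mul m), integral_const_mul, hq_zero,
      mul_zero, sub_zero]
  have hint : Integrable (fun x => ((φ x - m) ^ 2 + q x ^ 2) / 2) μ :=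
    (hφm.integrable_sq.add hq.integrable_sq).div_const 2
  rw [hmean, ← integral_add hφm.integrable_sq hq.integrable_sq, ← integral_div]
  refine norm_integral_le_of_norm_le (f := fun x => (φ x - m) * q x) hint
    (Eventually.of_forall fun x => ?_)
  rw [Real.norm_eq_abs, abs_mul, ← sq_abs (φ x - m), ← sq_abs (q x)]
  linarith [two_mul_le_add_sq |φ x - m| |q x|]

theorem nonpos_of_le_mul_of_le_div_mul_two_mul {e : ℝ → ℝ} {c K : ℝ} (hK : 0 ≤ K)
    (he : Monotone e) (hgrowth : ∀ R > 0, e R ≤ c * R)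
    (hdecay : ∀ R > 0, e R ≤ K / R * e (2 * R)) (R : ℝ) : e R ≤ 0 := by
  have hbound : ∀ S > 0, e S ≤ 2 * K ^ 2 * c / S := fun S hS => by
    have hS₂ : 0 < 2 * S := by positivity
    calc e S ≤ K / S * e (2 * S) := hdecay S hS
      _ ≤ K / S * (K / (2 * S) * e (2 * (2 * S))) := by gcongr; exact hdecay _ hS₂
      _ ≤ K / S * (K / (2 * S) * (c * (2 * (2 * S)))) := by
        gcongr
        exact hgrowth _ (by positivity)
      _ = 2 * K ^ 2 * c / S := by field_simp
  have hlim : Tendsto (fun S : ℝ => 2 * K ^ 2 * c / S) atTop (𝓝 0) :=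
    tendsto_const_nhds.div_atTop tendsto_id
  refine ge_of_tendsto hlim ?_
  filter_upwards [eventually_ge_atTop R, eventually_gt_atTop 0] with S hRS hS
  exact (he hRS).trans (hbound S hS)

theorem mulVec_dotProduct_self_le {ι : Type*} [Fintype ι] {A : Matrix ι ι ℝ} {Λ : ℝ}
    (hA : A.IsSymm) (hA_nonneg : ∀ ξ, 0 ≤ ξ ⬝ᵥ A *ᵥ ξ) (hA_le : ∀ ξ, ξ ⬝ᵥ A *ᵥ ξ ≤ Λ * (ξ ⬝ᵥ ξ))
    (ξ : ι → ℝ) : A *ᵥ ξ ⬝ᵥ A *ᵥ ξ ≤ Λ ^ 2 * (ξ ⬝ᵥ ξ) := by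
  classical
  let η := A *ᵥ ξ
  have hself (ζ : ι → ℝ) : 0 ≤ ζ ⬝ᵥ ζ := dotProduct_star_self_nonneg ζ
  have hB_symm : LinearMap.IsSymm (Matrix.toBilin' A) := ⟨fun x y => by
    simp only [Matrix.toBilin'_apply', RingHom.id_apply]
    rw [Matrix.dotProduct_mulVec, ← Matrix.mulVec_transpose, hA.eq, dotProduct_comm]⟩
  have hcs : (η ⬝ᵥ η) ^ 2 ≤ (η ⬝ᵥ A *ᵥ η) * (ξ ⬝ᵥ A *ᵥ ξ) := by
    have := (Matrix.toBilin' A).apply_sq_le_of_symm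
      (fun x => by simpa only [Matrix.toBilin'_apply'] using hA_nonneg x) hB_symm η ξ
    simpa only [Matrix.toBilin'_apply'] using this
  rcases (hself η).eq_or_lt with hη | hη
  · rw [show A *ᵥ ξ ⬝ᵥ A *ᵥ ξ = 0 from hη.symm]
    exact mul_nonneg (sq_nonneg Λ) (hself ξ)
  · refine le_of_mul_le_mul_left ?_ hη
    calc (η ⬝ᵥ η) * (η ⬝ᵥ η) = (η ⬝ᵥ η) ^ 2 := (sq _).symm
      _ ≤ (η ⬝ᵥ A *ᵥ η) * (ξ ⬝ᵥ A *ᵥ ξ) := hcs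
      _ ≤ (Λ * (η ⬝ᵥ η)) * (Λ * (ξ ⬝ᵥ ξ)) :=
        mul_le_mul (hA_le η) (hA_le ξ) (hA_nonneg ξ) ((hA_nonneg η).trans (hA_le η))
      _ = (η ⬝ᵥ η) * (Λ ^ 2 * (ξ ⬝ᵥ ξ)) := by ring

section Vectors

theorem normSq3_nonneg (u : Fin 3 → ℝ) : 0 ≤ normSq3 u :=
  Finset.sum_nonneg fun _ _ => sq_nonneg _

theorem normSq3_eq_zero {u : Fin 3 → ℝ} : normSq3 u = 0 ↔ u = 0 := by
  simp [normSq3, Finset.sum_eq_zero_iff_of_nonneg, sq_nonneg, funext_iff]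

theorem norm3_sq (u : Fin 3 → ℝ) : norm3 u ^ 2 = normSq3 u :=
  Real.sq_sqrt (normSq3_nonneg u)

theorem normSq3_eq_dotProduct (u : Fin 3 → ℝ) : normSq3 u = u ⬝ᵥ u := by
  simp only [normSq3, dotProduct, sq]

theorem sq_apply_le_normSq3 (u : Fin 3 → ℝ) (i : Fin 3) : u i ^ 2 ≤ normSq3 u :=
  Finset.single_le_sum (f := fun i => u i ^ 2) (fun _ _ => sq_nonneg _) (Finset.mem_univ i)

theorem abs_apply_le_norm3 (u : Fin 3 → ℝ) (i : Fin 3) : |u i| ≤ norm3 u :=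
  Real.abs_le_sqrt (sq_apply_le_normSq3 u i)

theorem norm_le_norm3 (u : Fin 3 → ℝ) : ‖u‖ ≤ norm3 u :=
  (pi_norm_le_iff_of_nonneg (Real.sqrt_nonneg _)).2 (abs_apply_le_norm3 u)

theorem continuous_normSq3 : Continuous normSq3 := by
  unfold normSq3
  fun_prop

theorem fderiv_apply_eq_sum_grad3 (φ : (Fin 3 → ℝ) → ℝ) (x u : Fin 3 → ℝ) :
    fderiv ℝ φ x u = ∑ i, u i * grad3 φ x i := by
  conv_lhs => rw [pi_eq_sum_univ' u, map_sum]
  simp only [map_smul, smul_eq_mul, grad3]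

theorem continuousOn_grad3 {Ω : Set (Fin 3 → ℝ)} {Φ : (Fin 3 → ℝ) → ℝ} (hΩ : IsOpen Ω)
    (hΦ : ContDiffOn ℝ 1 Φ Ω) : ContinuousOn (grad3 Φ) Ω :=
  continuousOn_pi.2 fun _ =>
    (hΦ.continuousOn_fderiv_of_isOpen hΩ le_rfl).clm_apply continuousOn_const

end Vectors

section Slab

variable {Ω : Set (Fin 3 → ℝ)} {C₀ : ℝ}

/-- The part of `Ω` within distance `R` of the plane `x₃ = 0`. -/
def slab (Ω : Set (Fin 3 → ℝ)) (R : ℝ) : Set (Fin 3 → ℝ) :=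
  Ω ∩ {x | |x 2| ≤ R}

/-- The Dirichlet energy of `Φ` over the slab of half-width `R`. -/
noncomputable def slabEnergy (Ω : Set (Fin 3 → ℝ)) (Φ : (Fin 3 → ℝ) → ℝ) (R : ℝ) : ℝ :=
  ∫ x in slab Ω R, normSq3 (grad3 Φ x)

theorem slab_subset (Ω : Set (Fin 3 → ℝ)) (R : ℝ) : slab Ω R ⊆ Ω :=
  inter_subset_left

theorem slab_mono {R S : ℝ} (h : R ≤ S) : slab Ω R ⊆ slab Ω S := fun _ hx =>
  ⟨hx.1, hx.2.trans h⟩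

theorem measurableSet_slab (hΩ : MeasurableSet Ω) (R : ℝ) : MeasurableSet (slab Ω R) :=
  hΩ.inter (measurableSet_le (by fun_prop) measurable_const)

theorem measurableSet_crossSection (hΩ : MeasurableSet Ω) (t : ℝ) :
    MeasurableSet (crossSection Ω t) :=
  ((measurableEmbedding_snoc 2).measurable.comp measurable_prodMk_left) hΩ

theorem snoc_mem_slab {t : ℝ} {x' : Fin 2 → ℝ} (hx : x' ∈ crossSection Ω t) :
    (Fin.snoc x' t : Fin 3 → ℝ) ∈ slab Ω |t| :=
  ⟨hx, (congrArg abs (Fin.snoc_last (α := fun _ => ℝ) t x')).le⟩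

theorem crossSection_slab_eq_or (Ω : Set (Fin 3 → ℝ)) (R t : ℝ) :
    crossSection (slab Ω R) t = crossSection Ω t ∨ crossSection (slab Ω R) t = ∅ := by
  have hmem (x' : Fin 2 → ℝ) :
      x' ∈ crossSection (slab Ω R) t ↔ x' ∈ crossSection Ω t ∧ |t| ≤ R := by
    change _ ∧ |(Fin.snoc x' t : Fin (2 + 1) → ℝ) (Fin.last 2)| ≤ R ↔ _
    rw [Fin.snoc_last]
    rfl
  by_cases ht : |t| ≤ R
  · exact Or.inl (ext fun x' => by rw [hmem, and_iff_left ht])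
  · exact Or.inr (eq_empty_iff_forall_notMem.2 fun x' hx => ht ((hmem x').1 hx).2)

theorem slab_subset_Icc (hΩC : Ω ⊆ {x | x 0 ^ 2 + x 1 ^ 2 < C₀ ^ 2}) (R : ℝ) :
    slab Ω R ⊆ Icc ![-|C₀|, -|C₀|, -R] ![|C₀|, |C₀|, R] := fun x hx => by
  have hlt : x 0 ^ 2 + x 1 ^ 2 < C₀ ^ 2 := hΩC hx.1
  have hx₀ : |x 0| ≤ |C₀| := sq_le_sq.1 (by linarith [sq_nonneg (x 1)])
  have hx₁ : |x 1| ≤ |C₀| := sq_le_sq.1 (by linarith [sq_nonneg (x 0)])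
  have hx₂ : |x 2| ≤ R := hx.2
  simp only [mem_Icc, Pi.le_def, Fin.forall_fin_succ]
  simp [abs_le.1 hx₀, abs_le.1 hx₁, abs_le.1 hx₂]

theorem isBounded_slab (hΩC : Ω ⊆ {x | x 0 ^ 2 + x 1 ^ 2 < C₀ ^ 2}) (R : ℝ) :
    Bornology.IsBounded (slab Ω R) :=
  (isBounded_Icc _ _).subset (slab_subset_Icc hΩC R)

theorem volume_real_slab_le (hΩC : Ω ⊆ {x | x 0 ^ 2 + x 1 ^ 2 < C₀ ^ 2}) {R : ℝ}
    (hR : 0 ≤ R) : volume.real (slab Ω R) ≤ 8 * C₀ ^ 2 * R := by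
  have hle : ![-|C₀|, -|C₀|, -R] ≤ ![|C₀|, |C₀|, R] := by
    simp [Pi.le_def, Fin.forall_fin_succ, hR]
  refine (measureReal_mono (slab_subset_Icc hΩC R) (isBounded_Icc _ _).measure_lt_top.ne).trans_eq
    ((Real.volume_Icc_pi_toReal hle).trans ?_)
  simp only [Fin.prod_univ_three, Matrix.cons_val]
  linear_combination 8 * R * sq_abs C₀

theorem isBounded_crossSection (hΩC : Ω ⊆ {x | x 0 ^ 2 + x 1 ^ 2 < C₀ ^ 2})
    (t : ℝ) : Bornology.IsBounded (crossSection Ω t) := by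
  obtain ⟨C, hC⟩ := (isBounded_slab hΩC |t|).exists_norm_le
  refine isBounded_iff_forall_norm_le.2 ⟨C, fun x' hx => (?_ : ‖x'‖ ≤ _).trans
    (hC _ (snoc_mem_slab hx))⟩
  refine (pi_norm_le_iff_of_nonneg (norm_nonneg _)).2 fun i => ?_
  simpa only [Fin.snoc_castSucc] using norm_le_pi_norm (Fin.snoc x' t : Fin 3 → ℝ) i.castSucc

end Slab

section Energy

variable {Ω : Set (Fin 3 → ℝ)} {Φ : (Fin 3 → ℝ) → ℝ} {v : (Fin 3 → ℝ) → Fin 3 → ℝ}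
  {C₀ M N R : ℝ}

theorem memLp_slab_of_bound {F : (Fin 3 → ℝ) → ℝ}
    (hΩ : MeasurableSet Ω) (hΩC : Ω ⊆ {x | x 0 ^ 2 + x 1 ^ 2 < C₀ ^ 2})
    (hF : AEStronglyMeasurable F (volume.restrict Ω)) {B : ℝ} (hB : ∀ x ∈ slab Ω R, |F x| ≤ B)
    (p : ENNReal) : MemLp F p (volume.restrict (slab Ω R)) := by
  have : Fact (volume (slab Ω R) < ⊤) := ⟨(isBounded_slab hΩC R).measure_lt_top⟩
  exact MemLp.of_bound (hF.mono_set (slab_subset Ω R)) B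
    ((ae_restrict_mem (measurableSet_slab hΩ R)).mono hB)

theorem memLp_crossSection_of_bound {F : (Fin 3 → ℝ) → ℝ} {t : ℝ} (hΩ : MeasurableSet Ω)
    (hΩC : Ω ⊆ {x | x 0 ^ 2 + x 1 ^ 2 < C₀ ^ 2})
    (hF : AEStronglyMeasurable (fun x' => F (Fin.snoc x' t)) (volume.restrict (crossSection Ω t)))
    {B : ℝ} (hB : ∀ x ∈ slab Ω |t|, |F x| ≤ B) (p : ENNReal) :
    MemLp (fun x' => F (Fin.snoc x' t)) p (volume.restrict (crossSection Ω t)) := by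
  have : Fact (volume (crossSection Ω t) < ⊤) := ⟨(isBounded_crossSection hΩC t).measure_lt_top⟩
  exact MemLp.of_bound hF B ((ae_restrict_mem (measurableSet_crossSection hΩ t)).mono
    fun x' hx => hB _ (snoc_mem_slab hx))

theorem exists_abs_le_slab (hΩC : Ω ⊆ {x | x 0 ^ 2 + x 1 ^ 2 < C₀ ^ 2})
    (hΦ : ContinuousOn Φ (closure Ω)) (R : ℝ) : ∃ B, ∀ x ∈ slab Ω R, |Φ x| ≤ B := by
  obtain ⟨B, hB⟩ := (isBounded_slab hΩC R).isCompact_closure.exists_bound_of_continuousOn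
    (hΦ.mono (closure_mono (slab_subset Ω R)))
  exact ⟨B, fun x hx => hB x (subset_closure hx)⟩

theorem memLp_slab (hΩ : MeasurableSet Ω) (hΩC : Ω ⊆ {x | x 0 ^ 2 + x 1 ^ 2 < C₀ ^ 2})
    (hΦ : ContinuousOn Φ (closure Ω)) (R : ℝ) (p : ENNReal) :
    MemLp Φ p (volume.restrict (slab Ω R)) :=
  let ⟨_, hB⟩ := exists_abs_le_slab hΩC hΦ R
  memLp_slab_of_bound hΩ hΩC ((hΦ.mono subset_closure).aestronglyMeasurable hΩ) hB p

theorem memLp_slab_apply (hΩ : MeasurableSet Ω) (hΩC : Ω ⊆ {x | x 0 ^ 2 + x 1 ^ 2 < C₀ ^ 2})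
    (hv : AEStronglyMeasurable v (volume.restrict Ω)) (hN : ∀ x ∈ Ω, norm3 (v x) ≤ N) (R : ℝ)
    (i : Fin 3) (p : ENNReal) : MemLp (fun x => v x i) p (volume.restrict (slab Ω R)) :=
  memLp_slab_of_bound hΩ hΩC ((continuous_apply i).comp_aestronglyMeasurable hv)
    (fun x hx => (abs_apply_le_norm3 _ i).trans (hN x hx.1)) p

theorem norm3_le_mul_of_normSq3_le {u w : Fin 3 → ℝ} {L : ℝ}
    (h : normSq3 u ≤ L ^ 2 * normSq3 w) (hw : norm3 w ≤ M) : norm3 u ≤ |L| * M :=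
  calc norm3 u ≤ √(L ^ 2 * normSq3 w) := Real.sqrt_le_sqrt h
    _ = |L| * norm3 w := by rw [Real.sqrt_mul (sq_nonneg L), Real.sqrt_sq_eq_abs, norm3, normSq3]
    _ ≤ |L| * M := by gcongr

theorem normSq3_grad3_le {x : Fin 3 → ℝ} (h : norm3 (grad3 Φ x) ≤ M) :
    normSq3 (grad3 Φ x) ≤ M ^ 2 := by
  rw [← norm3_sq]
  gcongr
  exact Real.sqrt_nonneg _

theorem integrableOn_slab_normSq3_grad3 (hΩ : IsOpen Ω)
    (hΩC : Ω ⊆ {x | x 0 ^ 2 + x 1 ^ 2 < C₀ ^ 2}) (hΦ : ContDiffOn ℝ 1 Φ Ω)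
    (hM : ∀ x ∈ Ω, norm3 (grad3 Φ x) ≤ M) (R : ℝ) :
    IntegrableOn (fun x => normSq3 (grad3 Φ x)) (slab Ω R) := by
  have hmeas := (continuous_normSq3.comp_continuousOn (continuousOn_grad3 hΩ hΦ))
    |>.aestronglyMeasurable (μ := volume) hΩ.measurableSet
  refine memLp_one_iff_integrable.1
    (memLp_slab_of_bound hΩ.measurableSet hΩC hmeas (B := M ^ 2) (fun x hx => ?_) 1)
  exact (abs_of_nonneg (normSq3_nonneg _)).trans_le (normSq3_grad3_le (hM x hx.1))

theorem slabEnergy_mono (hΩ : IsOpen Ω) (hΩC : Ω ⊆ {x | x 0 ^ 2 + x 1 ^ 2 < C₀ ^ 2})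
    (hΦ : ContDiffOn ℝ 1 Φ Ω) (hM : ∀ x ∈ Ω, norm3 (grad3 Φ x) ≤ M) :
    Monotone (slabEnergy Ω Φ) := fun _ S h =>
  setIntegral_mono_set (integrableOn_slab_normSq3_grad3 hΩ hΩC hΦ hM S)
    (Eventually.of_forall fun _ => normSq3_nonneg _) (slab_mono h).eventuallyLE

theorem slabEnergy_le_mul (hΩC : Ω ⊆ {x | x 0 ^ 2 + x 1 ^ 2 < C₀ ^ 2})
    (hM : ∀ x ∈ Ω, norm3 (grad3 Φ x) ≤ M) (hR : 0 ≤ R) :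
    slabEnergy Ω Φ R ≤ M ^ 2 * (8 * C₀ ^ 2) * R := by
  calc slabEnergy Ω Φ R ≤ ‖slabEnergy Ω Φ R‖ := Real.le_norm_self _
    _ ≤ M ^ 2 * volume.real (slab Ω R) := by
      refine norm_setIntegral_le_of_norm_le_const (isBounded_slab hΩC R).measure_lt_top
        fun x hx => ?_
      exact (abs_of_nonneg (normSq3_nonneg _)).trans_le (normSq3_grad3_le (hM x hx.1))
    _ ≤ M ^ 2 * (8 * C₀ ^ 2 * R) := by gcongr; exact volume_real_slab_le hΩC hR
    _ = M ^ 2 * (8 * C₀ ^ 2) * R := by ring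

theorem abs_setIntegral_crossSection_mul_le {Λ₀ Lam m t : ℝ} (hΩ : IsOpen Ω)
    (hΩC : Ω ⊆ {x | x 0 ^ 2 + x 1 ^ 2 < C₀ ^ 2}) (hΦ : ContDiffOn ℝ 1 Φ (closure Ω))
    (hM : ∀ x ∈ Ω, norm3 (grad3 Φ x) ≤ M) (hv : Measurable v)
    (hv_le : ∀ x ∈ Ω, normSq3 (v x) ≤ Lam ^ 2 * normSq3 (grad3 Φ x))
    (hm : ∫ x' in crossSection Ω t, (Φ (Fin.snoc x' t) - m) ^ 2 ≤
      Λ₀ ^ 2 * ∫ x' in crossSection Ω t, normSq3 (grad3 Φ (Fin.snoc x' t)))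
    (hflux : ∫ x' in crossSection Ω t, v (Fin.snoc x' t) 2 = 0) :
    |∫ x' in crossSection Ω t, Φ (Fin.snoc x' t) * v (Fin.snoc x' t) 2| ≤
      (Λ₀ ^ 2 + Lam ^ 2) / 2 * ∫ x' in crossSection Ω t, normSq3 (grad3 Φ (Fin.snoc x' t)) := by
  have : Fact (volume (crossSection Ω t) < ⊤) := ⟨(isBounded_crossSection hΩC t).measure_lt_top⟩
  have hsnoc : Continuous fun x' : Fin 2 → ℝ => (Fin.snoc x' t : Fin 3 → ℝ) :=
    Continuous.finSnoc (A := fun _ => ℝ) continuous_id continuous_const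
  have hmeas {F : (Fin 3 → ℝ) → ℝ} (hF : ContinuousOn F Ω) : AEStronglyMeasurable
      (fun x' => F (Fin.snoc x' t)) (volume.restrict (crossSection Ω t)) :=
    (hF.comp hsnoc.continuousOn fun _ hx => hx).aestronglyMeasurable
      (measurableSet_crossSection hΩ.measurableSet t)
  obtain ⟨B, hB⟩ := exists_abs_le_slab hΩC hΦ.continuousOn |t|
  have hφ := memLp_crossSection_of_bound hΩ.measurableSet hΩC
    (hmeas (hΦ.continuousOn.mono subset_closure)) hB 2
  have hq : MemLp (fun x' => v (Fin.snoc x' t) 2) 2 (volume.restrict (crossSection Ω t)) := by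
    refine memLp_crossSection_of_bound (F := fun x => v x 2) (B := |Lam| * M) hΩ.measurableSet hΩC
      (((measurable_pi_apply 2).comp hv).comp hsnoc.measurable).aestronglyMeasurable
      (fun x hx => (abs_apply_le_norm3 _ 2).trans ?_) 2
    exact norm3_le_mul_of_normSq3_le (hv_le x hx.1) (hM x hx.1)
  have hG := (memLp_crossSection_of_bound hΩ.measurableSet hΩC (hmeas
    (continuous_normSq3.comp_continuousOn (continuousOn_grad3 hΩ (hΦ.mono subset_closure))))
    (fun x hx => (abs_of_nonneg (normSq3_nonneg _)).trans_le (normSq3_grad3_le (hM x hx.1)))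
    1).integrable le_rfl
  have hq_le : ∫ x' in crossSection Ω t, v (Fin.snoc x' t) 2 ^ 2 ≤
      Lam ^ 2 * ∫ x' in crossSection Ω t, normSq3 (grad3 Φ (Fin.snoc x' t)) := by
    rw [← integral_const_mul]
    exact setIntegral_mono_on hq.integrable_sq (hG.const_mul _)
      (measurableSet_crossSection hΩ.measurableSet t)
      fun x' hx => (sq_apply_le_normSq3 _ 2).trans (hv_le _ hx)
  linarith [abs_integral_mul_le_of_integral_eq_zero hφ hq hflux m]

end Energy

section Caccioppoli

variable {Ω : Set (Fin 3 → ℝ)} {Φ : (Fin 3 → ℝ) → ℝ} {v : (Fin 3 → ℝ) → Fin 3 → ℝ}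
  {χ : ℝ → ℝ} {C₀ M N R : ℝ}

theorem fderiv_comp_eval_two_mul {x : Fin 3 → ℝ} (hχ : DifferentiableAt ℝ χ (x 2))
    (hΦ : DifferentiableAt ℝ Φ x) (u : Fin 3 → ℝ) :
    fderiv ℝ (fun y => χ (y 2) * Φ y) x u =
      χ (x 2) * ∑ i, u i * grad3 Φ x i + deriv χ (x 2) * (Φ x * u 2) := by
  have hχ' : HasFDerivAt (fun y : Fin 3 → ℝ => χ (y 2)) _ x :=
    hχ.hasDerivAt.comp_hasFDerivAt x
      (ContinuousLinearMap.proj (R := ℝ) (φ := fun _ : Fin 3 => ℝ) 2).hasFDerivAt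
  rw [(hχ'.fun_mul hΦ.hasFDerivAt).fderiv, ← fderiv_apply_eq_sum_grad3]
  simp only [add_apply, smul_apply, smul_eq_mul, ContinuousLinearMap.proj_apply]
  ring

theorem integrableOn_slab_comp_mul {F : (Fin 3 → ℝ) → ℝ} (hΩ : MeasurableSet Ω)
    (hχ : Continuous χ) (hF : IntegrableOn F (slab Ω R)) :
    IntegrableOn (fun x => χ (x 2) * F x) (slab Ω R) := by
  obtain ⟨B, hB⟩ := (isCompact_Icc (a := -R) (b := R)).exists_bound_of_continuousOn hχ.continuousOn
  exact Integrable.bdd_mul hF (hχ.comp (continuous_apply 2)).aestronglyMeasurable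
    ((ae_restrict_mem (measurableSet_slab hΩ R)).mono fun x hx => hB _ (abs_le.1 hx.2))

theorem integrableOn_slab_mul_apply (hΩ : MeasurableSet Ω)
    (hΩC : Ω ⊆ {x | x 0 ^ 2 + x 1 ^ 2 < C₀ ^ 2}) (hΦ : ContinuousOn Φ (closure Ω))
    (hv : AEStronglyMeasurable v (volume.restrict Ω)) (hN : ∀ x ∈ Ω, norm3 (v x) ≤ N) (R : ℝ) :
    IntegrableOn (fun x => Φ x * v x 2) (slab Ω R) :=
  (memLp_slab hΩ hΩC hΦ R 2).integrable_mul (memLp_slab_apply hΩ hΩC hv hN R 2 2)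

theorem integrableOn_slab_sum_mul_grad3 (hΩ : IsOpen Ω)
    (hΩC : Ω ⊆ {x | x 0 ^ 2 + x 1 ^ 2 < C₀ ^ 2}) (hΦ : ContDiffOn ℝ 1 Φ Ω)
    (hM : ∀ x ∈ Ω, norm3 (grad3 Φ x) ≤ M) (hv : AEStronglyMeasurable v (volume.restrict Ω))
    (hN : ∀ x ∈ Ω, norm3 (v x) ≤ N) (R : ℝ) :
    IntegrableOn (fun x => ∑ i, v x i * grad3 Φ x i) (slab Ω R) := by
  have hgrad := (continuousOn_grad3 hΩ hΦ).aestronglyMeasurable (μ := volume) hΩ.measurableSet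
  exact integrable_finsetSum _ fun i _ =>
    (memLp_slab_apply hΩ.measurableSet hΩC hv hN R i 2).integrable_mul
      (memLp_slab_apply hΩ.measurableSet hΩC hgrad hM R i 2)

theorem integral_cutoff_mul_eq (hΩ : IsOpen Ω)
    (hΩC : Ω ⊆ {x | x 0 ^ 2 + x 1 ^ 2 < C₀ ^ 2}) (hΦ : ContDiffOn ℝ 1 Φ (closure Ω))
    (hM : ∀ x ∈ Ω, norm3 (grad3 Φ x) ≤ M) (hv : AEStronglyMeasurable v (volume.restrict Ω))
    (hN : ∀ x ∈ Ω, norm3 (v x) ≤ N)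
    (hweak : ∀ ψ, ContDiff ℝ 1 ψ → HasCompactSupport ψ →
      ∫ x in Ω, ∑ i, v x i * grad3 ψ x i = 0)
    (hχ : ContDiff ℝ 1 χ) (hχR : tsupport χ ⊆ Icc (-R) R) :
    ∫ x in slab Ω R, χ (x 2) * ∑ i, v x i * grad3 Φ x i =
      -∫ x in slab Ω R, deriv χ (x 2) * (Φ x * v x 2) := by
  have hΦΩ : ContDiffOn ℝ 1 Φ Ω := hΦ.mono subset_closure
  have hχ₂ : ContDiff ℝ 1 fun x : Fin 3 → ℝ => χ (x 2) := hχ.comp (contDiff_apply ℝ ℝ 2)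
  have hfv (x) (hx : x ∈ Ω) := fderiv_comp_eval_two_mul (hχ.differentiable one_ne_zero (x 2))
    ((hΦΩ.differentiableOn one_ne_zero).differentiableAt (hΩ.mem_nhds hx)) (v x)
  have hχ_slab (x) (hx : x ∈ Ω \ slab Ω R) : x 2 ∉ tsupport χ := fun h =>
    hx.2 ⟨hx.1, abs_le.2 (hχR h)⟩
  have hfv_slab (x) (hx : x ∈ Ω \ slab Ω R) :
      fderiv ℝ (fun y => χ (y 2) * Φ y) x (v x) = 0 := by
    rw [hfv x hx.1, image_eq_zero_of_notMem_tsupport (hχ_slab x hx),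
      Function.notMem_support.1 fun h => hχ_slab x hx (support_deriv_subset h), zero_mul, zero_mul,
      add_zero]
  have hint := integrableOn_slab_comp_mul hΩ.measurableSet hχ.continuous
    (integrableOn_slab_sum_mul_grad3 hΩ hΩC hΦΩ hM hv hN R)
  have hint' := integrableOn_slab_comp_mul hΩ.measurableSet (hχ.continuous_deriv le_rfl)
    (integrableOn_slab_mul_apply hΩ.measurableSet hΩC hΦ.continuousOn hv hN R)
  have hslab : MeasurableSet (slab Ω R) := measurableSet_slab hΩ.measurableSet R
  have hfv_int : IntegrableOn (fun x => fderiv ℝ (fun y => χ (y 2) * Φ y) x (v x)) Ω :=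
    ((hint.add hint').congr_fun (fun x hx => (hfv x hx.1).symm) hslab).of_forall_sdiff_eq_zero
      hΩ.measurableSet hfv_slab
  have hzero : ∫ x in Ω, fderiv ℝ (fun y => χ (y 2) * Φ y) x (v x) = 0 := by
    refine integral_fderiv_eq_zero_of_forall_contDiff hΩ
      (isBounded_slab hΩC R).isCompact_closure (fun x hx => ?_)
      ((hχ₂.contDiffOn.mul hΦ).differentiableOn one_ne_zero) (hχ₂.contDiffOn.mul hΦΩ)
      ((locallyIntegrable_const N).mono hv ?_) hfv_int.locallyIntegrable ?_
    · rw [image_eq_zero_of_notMem_tsupport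
        (hχ_slab x ⟨hx.1, fun h => hx.2 (subset_closure h)⟩), zero_mul]
    · filter_upwards [ae_restrict_mem hΩ.measurableSet] with x hx
      exact ((norm_le_norm3 _).trans (hN x hx)).trans (Real.le_norm_self N)
    · simpa only [fderiv_apply_eq_sum_grad3] using hweak
  rw [setIntegral_eq_of_subset_of_forall_sdiff_eq_zero hΩ.measurableSet (slab_subset Ω R) hfv_slab,
    setIntegral_congr_fun hslab fun x hx => hfv x hx.1, integral_add hint hint'] at hzero
  exact eq_neg_of_add_eq_zero_left hzero

end Caccioppoli

section Decay

variable {Ω : Set (Fin 3 → ℝ)} {Φ : (Fin 3 → ℝ) → ℝ} {v : (Fin 3 → ℝ) → Fin 3 → ℝ}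
  {C₀ Λ₀ lam Lam M N R : ℝ}

theorem exists_cutoff : ∃ C ≥ 0, ∀ R > 0, ∃ χ : ℝ → ℝ, ContDiff ℝ 1 χ ∧ (∀ t, 0 ≤ χ t) ∧
    (∀ t, |t| ≤ R → χ t = 1) ∧ tsupport χ ⊆ Icc (-(2 * R)) (2 * R) ∧
    ∀ t, |deriv χ t| ≤ C / R := by
  let b : ContDiffBump (0 : ℝ) := ⟨1, 2, one_pos, one_lt_two⟩
  obtain ⟨C, hC⟩ := (b.contDiff.continuous_deriv le_rfl).bounded_above_of_compact_support
    b.hasCompactSupport.deriv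
  refine ⟨C, (norm_nonneg _).trans (hC 0), fun R hR => ⟨fun t => b (R⁻¹ * t),
    b.contDiff.comp (contDiff_const.mul contDiff_id),
    fun _ => b.nonneg, fun t ht => b.one_of_mem_closedBall ?_, closure_minimal ?_ isClosed_Icc,
    fun t => ?_⟩⟩
  · rw [mem_closedBall_zero_iff, norm_mul, norm_inv, Real.norm_of_nonneg hR.le, Real.norm_eq_abs]
    exact inv_mul_le_one_of_le₀ ht hR.le
  · intro t ht
    have h : R⁻¹ * t ∈ ball (0 : ℝ) 2 := b.support_eq ▸ (show R⁻¹ * t ∈ Function.support b from ht)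
    rw [mem_ball_zero_iff, norm_mul, norm_inv, Real.norm_of_nonneg hR.le, inv_mul_lt_iff₀ hR,
      mul_comm] at h
    exact abs_le.1 h.le
  · rw [deriv_comp_mul_left, smul_eq_mul, abs_mul, abs_inv, abs_of_pos hR, ← div_eq_inv_mul]
    exact div_le_div_of_nonneg_right (hC _) hR.le

theorem mul_slabEnergy_le_integral_cutoff_mul {χ : ℝ → ℝ} {S : ℝ} (hΩ : IsOpen Ω)
    (hΩC : Ω ⊆ {x | x 0 ^ 2 + x 1 ^ 2 < C₀ ^ 2}) (hΦ : ContDiffOn ℝ 1 Φ Ω)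
    (hM : ∀ x ∈ Ω, norm3 (grad3 Φ x) ≤ M) (hlam : 0 ≤ lam)
    (hv : AEStronglyMeasurable v (volume.restrict Ω)) (hN : ∀ x ∈ Ω, norm3 (v x) ≤ N)
    (hv_ge : ∀ x ∈ Ω, lam * normSq3 (grad3 Φ x) ≤ ∑ i, v x i * grad3 Φ x i)
    (hχ : Continuous χ) (hχ_nonneg : ∀ t, 0 ≤ χ t) (hχ_one : ∀ t, |t| ≤ R → χ t = 1)
    (hRS : R ≤ S) :
    lam * slabEnergy Ω Φ R ≤ ∫ x in slab Ω S, χ (x 2) * ∑ i, v x i * grad3 Φ x i := by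
  have hint := integrableOn_slab_comp_mul hΩ.measurableSet hχ
    (integrableOn_slab_sum_mul_grad3 hΩ hΩC hΦ hM hv hN S)
  have hslab (r : ℝ) : MeasurableSet (slab Ω r) := measurableSet_slab hΩ.measurableSet r
  calc lam * slabEnergy Ω Φ R = ∫ x in slab Ω R, lam * normSq3 (grad3 Φ x) :=
        (integral_const_mul _ _).symm
    _ ≤ ∫ x in slab Ω R, χ (x 2) * ∑ i, v x i * grad3 Φ x i := by
      refine setIntegral_mono_on ((integrableOn_slab_normSq3_grad3 hΩ hΩC hΦ hM R).const_mul lam)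
        (hint.mono_set (slab_mono hRS)) (hslab R) fun x hx => ?_
      rw [hχ_one _ hx.2, one_mul]
      exact hv_ge x hx.1
    _ ≤ ∫ x in slab Ω S, χ (x 2) * ∑ i, v x i * grad3 Φ x i := by
      refine setIntegral_mono_set hint ?_ (slab_mono hRS).eventuallyLE
      filter_upwards [ae_restrict_mem (hslab S)] with x hx
      exact mul_nonneg (hχ_nonneg _)
        ((mul_nonneg hlam (normSq3_nonneg _)).trans (hv_ge x hx.1))

theorem abs_integral_mul_flux_le {a : ℝ → ℝ} {B : ℝ} (hΩ : IsOpen Ω)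
    (hΩC : Ω ⊆ {x | x 0 ^ 2 + x 1 ^ 2 < C₀ ^ 2}) (hΦ : ContDiffOn ℝ 1 Φ (closure Ω))
    (hM : ∀ x ∈ Ω, norm3 (grad3 Φ x) ≤ M) (hv : Measurable v)
    (hv_le : ∀ x ∈ Ω, normSq3 (v x) ≤ Lam ^ 2 * normSq3 (grad3 Φ x))
    (hPoincare : ∀ t, ∃ m, ∫ x' in crossSection Ω t, (Φ (Fin.snoc x' t) - m) ^ 2 ≤
      Λ₀ ^ 2 * ∫ x' in crossSection Ω t, normSq3 (grad3 Φ (Fin.snoc x' t)))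
    (hflux : ∀ t, ∫ x' in crossSection Ω t, v (Fin.snoc x' t) 2 = 0)
    (ha : Continuous a) (haB : ∀ t, |a t| ≤ B) (R : ℝ) :
    |∫ x in slab Ω R, a (x 2) * (Φ x * v x 2)| ≤
      B * ((Λ₀ ^ 2 + Lam ^ 2) / 2) * slabEnergy Ω Φ R := by
  refine abs_setIntegral_mul_le_of_abs_setIntegral_snoc_le (n := 2)
    (measurableSet_slab hΩ.measurableSet R)
    (integrableOn_slab_comp_mul hΩ.measurableSet ha
      (integrableOn_slab_mul_apply hΩ.measurableSet hΩC hΦ.continuousOn hv.aestronglyMeasurable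
        (fun x hx => norm3_le_mul_of_normSq3_le (hv_le x hx) (hM x hx)) R))
    (integrableOn_slab_normSq3_grad3 hΩ hΩC (hΦ.mono subset_closure) hM R) haB fun t => ?_
  change |∫ x' in crossSection (slab Ω R) t, _| ≤ _ * ∫ x' in crossSection (slab Ω R) t, _
  obtain h | h := crossSection_slab_eq_or Ω R t
  · obtain ⟨m, hm⟩ := hPoincare t
    rw [h]
    exact abs_setIntegral_crossSection_mul_le hΩ hΩC hΦ hM hv hv_le hm (hflux t)
  · simp [h]

theorem exists_slabEnergy_le_div_mul (hΩ : IsOpen Ω)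
    (hΩC : Ω ⊆ {x | x 0 ^ 2 + x 1 ^ 2 < C₀ ^ 2}) (hΦ : ContDiffOn ℝ 1 Φ (closure Ω))
    (hM : ∀ x ∈ Ω, norm3 (grad3 Φ x) ≤ M) (hlam : 0 < lam) (hv : Measurable v)
    (hv_ge : ∀ x ∈ Ω, lam * normSq3 (grad3 Φ x) ≤ ∑ i, v x i * grad3 Φ x i)
    (hv_le : ∀ x ∈ Ω, normSq3 (v x) ≤ Lam ^ 2 * normSq3 (grad3 Φ x))
    (hPoincare : ∀ t, ∃ m, ∫ x' in crossSection Ω t, (Φ (Fin.snoc x' t) - m) ^ 2 ≤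
      Λ₀ ^ 2 * ∫ x' in crossSection Ω t, normSq3 (grad3 Φ (Fin.snoc x' t)))
    (hweak : ∀ ψ, ContDiff ℝ 1 ψ → HasCompactSupport ψ →
      ∫ x in Ω, ∑ i, v x i * grad3 ψ x i = 0)
    (hflux : ∀ t, ∫ x' in crossSection Ω t, v (Fin.snoc x' t) 2 = 0) :
    ∃ K ≥ 0, ∀ R > 0, slabEnergy Ω Φ R ≤ K / R * slabEnergy Ω Φ (2 * R) := by
  obtain ⟨C, hC, hcutoff⟩ := exists_cutoff
  have hN (x) (hx : x ∈ Ω) := norm3_le_mul_of_normSq3_le (hv_le x hx) (hM x hx)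
  refine ⟨C * ((Λ₀ ^ 2 + Lam ^ 2) / 2) / lam, by positivity, fun R hR => ?_⟩
  obtain ⟨χ, hχ, hχ_nonneg, hχ_one, hχ_supp, hχ'⟩ := hcutoff R hR
  refine le_of_mul_le_mul_left ?_ hlam
  calc lam * slabEnergy Ω Φ R
      ≤ ∫ x in slab Ω (2 * R), χ (x 2) * ∑ i, v x i * grad3 Φ x i :=
        mul_slabEnergy_le_integral_cutoff_mul hΩ hΩC (hΦ.mono subset_closure) hM hlam.le
          hv.aestronglyMeasurable hN hv_ge hχ.continuous hχ_nonneg hχ_one (by linarith)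
    _ = -∫ x in slab Ω (2 * R), deriv χ (x 2) * (Φ x * v x 2) :=
        integral_cutoff_mul_eq hΩ hΩC hΦ hM hv.aestronglyMeasurable hN hweak hχ hχ_supp
    _ ≤ C / R * ((Λ₀ ^ 2 + Lam ^ 2) / 2) * slabEnergy Ω Φ (2 * R) :=
        (neg_le_abs _).trans (abs_integral_mul_flux_le hΩ hΩC hΦ hM hv hv_le hPoincare hflux
          (hχ.continuous_deriv le_rfl) hχ' (2 * R))
    _ = lam * (C * ((Λ₀ ^ 2 + Lam ^ 2) / 2) / lam / R * slabEnergy Ω Φ (2 * R)) := by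
        field_simp

theorem grad3_eq_zero_of_slabEnergy_nonpos (hΩ : IsOpen Ω)
    (hΩC : Ω ⊆ {x | x 0 ^ 2 + x 1 ^ 2 < C₀ ^ 2}) (hΦ : ContDiffOn ℝ 1 Φ Ω)
    (hM : ∀ x ∈ Ω, norm3 (grad3 Φ x) ≤ M) (henergy : ∀ R, slabEnergy Ω Φ R ≤ 0) :
    ∀ x ∈ Ω, grad3 Φ x = 0 := by
  intro x hx
  let U : Set (Fin 3 → ℝ) := Ω ∩ {y | |y 2| < |x 2| + 1}
  have hU : IsOpen U := hΩ.inter (isOpen_lt (by fun_prop) continuous_const)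
  have hU_slab : U ⊆ slab Ω (|x 2| + 1) := fun y hy =>
    ⟨hy.1, (show |y 2| < |x 2| + 1 from hy.2).le⟩
  have hnonneg : ∀ R, 0 ≤ slabEnergy Ω Φ R := fun R => integral_nonneg fun _ => normSq3_nonneg _
  have hae : (fun y => normSq3 (grad3 Φ y)) =ᵐ[volume.restrict U] 0 :=
    ae_restrict_of_ae_restrict_of_subset hU_slab <|
      (integral_eq_zero_iff_of_nonneg (fun _ => normSq3_nonneg _)
        (integrableOn_slab_normSq3_grad3 hΩ hΩC hΦ hM _)).1 ((henergy _).antisymm (hnonneg _))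
  have hcont : ContinuousOn (fun y => normSq3 (grad3 Φ y)) U :=
    continuous_normSq3.comp_continuousOn ((continuousOn_grad3 hΩ hΦ).mono inter_subset_left)
  exact normSq3_eq_zero.1 (Measure.eqOn_open_of_ae_eq hae hU hcont continuousOn_const
    ⟨hx, show |x 2| < |x 2| + 1 from lt_add_one _⟩)

end Decay

section Ellipticity

variable {A : (Fin 3 → ℝ) → Fin 3 → Fin 3 → ℝ}

theorem measurable_sum_mul_grad3 (hA : Measurable A) (Φ : (Fin 3 → ℝ) → ℝ) :
    Measurable fun x i => ∑ j, A x i j * grad3 Φ x j :=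
  measurable_pi_lambda _ fun i => Finset.measurable_fun_sum _ fun j _ =>
    ((measurable_pi_apply j).comp ((measurable_pi_apply i).comp hA)).mul
      (measurable_fderiv_apply_const ℝ Φ (Pi.single j 1))

theorem sum_sum_mul_mul_eq (B : Fin 3 → Fin 3 → ℝ) (ξ : Fin 3 → ℝ) :
    ∑ i, ∑ j, ξ i * B i j * ξ j = ∑ i, (∑ j, B i j * ξ j) * ξ i := by
  simp only [Finset.sum_mul]
  exact Finset.sum_congr rfl fun i _ => Finset.sum_congr rfl fun j _ => by ring

theorem normSq3_sum_mul_le {B : Fin 3 → Fin 3 → ℝ} {Lam : ℝ} (hB : ∀ i j, B i j = B j i)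
    (hB_nonneg : ∀ ξ : Fin 3 → ℝ, 0 ≤ ∑ i, ∑ j, ξ i * B i j * ξ j)
    (hB_le : ∀ ξ : Fin 3 → ℝ, ∑ i, ∑ j, ξ i * B i j * ξ j ≤ Lam * normSq3 ξ) (ξ : Fin 3 → ℝ) :
    normSq3 (fun i => ∑ j, B i j * ξ j) ≤ Lam ^ 2 * normSq3 ξ := by
  have hform (ζ : Fin 3 → ℝ) : ∑ i, ∑ j, ζ i * B i j * ζ j = ζ ⬝ᵥ Matrix.of B *ᵥ ζ := by
    rw [sum_sum_mul_mul_eq, dotProduct_comm]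
    rfl
  have h := mulVec_dotProduct_self_le (A := Matrix.of B) (Λ := Lam)
    (Matrix.ext fun i j => hB j i) (fun ζ => hform ζ ▸ hB_nonneg ζ)
    (fun ζ => hform ζ ▸ normSq3_eq_dotProduct ζ ▸ hB_le ζ) ξ
  rwa [← normSq3_eq_dotProduct, ← normSq3_eq_dotProduct] at h

end Ellipticity

/-- Here `v` stands for the flux `A ∇Φ`, and its coercivity and linear growth in `∇Φ` for the
ellipticity of `A`. -/
theorem uniqueness_mechanism_nozzle_general
    {C₀ Λ₀ lam Lam : ℝ} (hlam : 0 < lam) {Ω : Set (Fin 3 → ℝ)} (hΩ : IsOpen Ω)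
    (hΩC : Ω ⊆ {x | x 0 ^ 2 + x 1 ^ 2 < C₀ ^ 2}) {Φ : (Fin 3 → ℝ) → ℝ}
    (hΦ : ContDiffOn ℝ 1 Φ (closure Ω)) (hM : ∃ M, ∀ x ∈ Ω, norm3 (grad3 Φ x) ≤ M)
    (hPoincare : ∀ t, ∃ m, ∫ x' in crossSection Ω t, (Φ (Fin.snoc x' t) - m) ^ 2 ≤
      Λ₀ ^ 2 * ∫ x' in crossSection Ω t, normSq3 (grad3 Φ (Fin.snoc x' t)))
    {v : (Fin 3 → ℝ) → Fin 3 → ℝ} (hv : Measurable v)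
    (hv_ge : ∀ x ∈ Ω, lam * normSq3 (grad3 Φ x) ≤ ∑ i, v x i * grad3 Φ x i)
    (hv_le : ∀ x ∈ Ω, normSq3 (v x) ≤ Lam ^ 2 * normSq3 (grad3 Φ x))
    (hweak : ∀ ψ, ContDiff ℝ 1 ψ → HasCompactSupport ψ →
      ∫ x in Ω, ∑ i, v x i * grad3 ψ x i = 0)
    (hflux : ∀ t, ∫ x' in crossSection Ω t, v (Fin.snoc x' t) 2 = 0) :
    ∀ x ∈ Ω, grad3 Φ x = 0 := by
  obtain ⟨M, hM⟩ := hM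
  have hΦΩ : ContDiffOn ℝ 1 Φ Ω := hΦ.mono subset_closure
  obtain ⟨K, hK, hdecay⟩ :=
    exists_slabEnergy_le_div_mul hΩ hΩC hΦ hM hlam hv hv_ge hv_le hPoincare hweak hflux
  exact grad3_eq_zero_of_slabEnergy_nonpos hΩ hΩC hΦΩ hM <|
    nonpos_of_le_mul_of_le_div_mul_two_mul hK (slabEnergy_mono hΩ hΩC hΦΩ hM)
      (fun _ hR => slabEnergy_le_mul hΩC hM hR.le) hdecay

/-- the uniqueness (Liouville) mechanism: a bounded-gradient weak solution
of div(A∇Φ) = 0 with conormal boundary condition, uniformly elliptic symmetric A,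
zero flux through every cross-section, in a domain of bounded cross-section satisfying
the uniform cross-sectional Poincaré inequality, has ∇Φ ≡ 0. -/
theorem uniqueness_mechanism_nozzle
    (C₀ Λ₀ lam Lam : ℝ) (hC₀ : 0 < C₀) (hΛ₀ : 0 < Λ₀) (hlam : 0 < lam) (hlamLam : lam ≤ Lam)
    (Ω : Set (Fin 3 → ℝ)) (hΩopen : IsOpen Ω) (hΩconn : IsConnected Ω)
    (hΩbdd : Ω ⊆ {x | (x 0) ^ 2 + (x 1) ^ 2 < C₀ ^ 2})
    -- every cross-section has positive finite area
    (hSigma : ∀ t : ℝ, 0 < volume (crossSection Ω t) ∧ volume (crossSection Ω t) < ⊤)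
    -- uniform cross-sectional Poincaré inequality
    (hPoincare : ∀ t : ℝ, ∀ w : (Fin 3 → ℝ) → ℝ, ContDiffOn ℝ 1 w (closure Ω) →
      ∫ x' in crossSection Ω t,
          (w (Fin.snoc x' t)
            - (∫ y' in crossSection Ω t, w (Fin.snoc y' t)) /
              (volume (crossSection Ω t)).toReal) ^ 2
        ≤ Λ₀ ^ 2 * ∫ x' in crossSection Ω t, normSq3 (grad3 w (Fin.snoc x' t)))
    -- the symmetric uniformly elliptic coefficient matrix A
    (A : (Fin 3 → ℝ) → Fin 3 → Fin 3 → ℝ) (hAmeas : Measurable A)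
    (hAsymm : ∀ x ∈ Ω, ∀ i j : Fin 3, A x i j = A x j i)
    (hAell : ∀ x ∈ Ω, ∀ ξ : Fin 3 → ℝ,
      lam * normSq3 ξ ≤ ∑ i, ∑ j, ξ i * A x i j * ξ j ∧
      ∑ i, ∑ j, ξ i * A x i j * ξ j ≤ Lam * normSq3 ξ)
    -- Φ : C¹ with bounded gradient, weak solution, zero flux
    (Φ : (Fin 3 → ℝ) → ℝ) (hΦC1 : ContDiffOn ℝ 1 Φ (closure Ω))
    (hΦgradbdd : ∃ M : ℝ, ∀ x ∈ Ω, norm3 (grad3 Φ x) ≤ M)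
    (hweak : ∀ ψ : (Fin 3 → ℝ) → ℝ, ContDiff ℝ 1 ψ → HasCompactSupport ψ →
      ∫ x in Ω, ∑ i, (∑ j, A x i j * grad3 Φ x j) * grad3 ψ x i = 0)
    (hflux : ∀ t : ℝ,
      ∫ x' in crossSection Ω t, ∑ j, A (Fin.snoc x' t) 2 j * grad3 Φ (Fin.snoc x' t) j = 0) :
    ∀ x ∈ Ω, grad3 Φ x = 0 := by
  have hA_nonneg (x) (hx : x ∈ Ω) (ξ : Fin 3 → ℝ) : 0 ≤ ∑ i, ∑ j, ξ i * A x i j * ξ j :=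
    (mul_nonneg hlam.le (normSq3_nonneg ξ)).trans (hAell x hx ξ).1
  exact uniqueness_mechanism_nozzle_general hlam hΩopen hΩbdd hΦC1 hΦgradbdd
    (fun t => ⟨_, hPoincare t Φ hΦC1⟩) (measurable_sum_mul_grad3 hAmeas Φ)
    (fun x hx => sum_sum_mul_mul_eq (A x) _ ▸ (hAell x hx _).1)
    (fun x hx => normSq3_sum_mul_le (hAsymm x hx) (hA_nonneg x hx) (fun ξ => (hAell x hx ξ).2) _)
    hweak hflux
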